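/- arXiv:1809.03673 — 5 statements merged into one kernel-verified Lean document; each statement's English description precedes it below -/
import Mathlib

section
/- Let u and v be nonnegative integers with u+v = 3, and let α₁ ≤ ⋯ ≤ α_u and β₁ ≤ ⋯ ≤ β_v be positive integers. The ternary mixed sum Φ = α₁P₄(x₁)+⋯+α_uP₄(x_u)+β₁P₈(y₁)+⋯+β_vP₈(y_v) is universal if and only if the coefficient data (α₁,…,α_u; β₁,…,β_v) is one of the following six: (1,1;1), (1,1;2), (1,3;1), (1;1,1), (2,3;1), (2;1,1). In other words, the only ternary universal mixed sums of generalized 4- and 8-gonal numbers are x²+y²+P₈(z), x²+y²+2P₈(z), x²+3y²+P₈(z), x²+P₈(y)+P₈(z), 2x²+3y²+P₈(z), and 2x²+P₈(y)+P₈(z). -/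
/-- The mixed sum with square coefficients `a` and generalized octagonal
coefficients `b` represents the integer `N`. -/
def mixedRepresents (a b : List ℤ) (N : ℤ) : Prop :=
  ∃ x y : List ℤ, x.length = a.length ∧ y.length = b.length ∧
    (List.zipWith (fun c t => c * t ^ 2) a x).sum +
      (List.zipWith (fun c t => c * (3 * t ^ 2 - 2 * t)) b y).sum = N

/-- The mixed sum of generalized 4- and 8-gonal numbers is universal. -/
def mixedUniversal (a b : List ℤ) : Prop :=
  ∀ N : ℤ, 0 ≤ N → mixedRepresents a b N


def tS (k a A : ℤ) : Prop :=
  ∃ b c r s t : ℤ, 0 < a ∧ 0 < A ∧ 4 * a * b - t ^ 2 = A ∧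
    4 * a * b * c + r * s * t - a * r ^ 2 - b * s ^ 2 - c * t ^ 2 = 3 ∧
    ∃ x y z : ℤ, a * x ^ 2 + b * y ^ 2 + c * z ^ 2 + r * y * z + s * z * x + t * x * y = k

lemma near (B A : ℤ) (hA : 0 < A) : ∃ m : ℤ, -A ≤ 2 * (B + m * A) ∧ 2 * (B + m * A) ≤ A := by
  refine ⟨-((2 * B + A) / (2 * A)), ?_⟩
  have h1 := Int.emod_add_mul_ediv (2 * B + A) (2 * A)
  have h2 := Int.emod_nonneg (2 * B + A) (show 2 * A ≠ 0 by omega)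
  have h3 := Int.emod_lt_of_pos (2 * B + A) (show 0 < 2 * A by omega)
  constructor <;> nlinarith

lemma tS_norm {k a A : ℤ} (h : tS k a A) :
    ∃ b c r s t : ℤ, 0 < a ∧ 0 < A ∧ 4 * a * b - t ^ 2 = A ∧
    4 * a * b * c + r * s * t - a * r ^ 2 - b * s ^ 2 - c * t ^ 2 = 3 ∧
    (∃ x y z : ℤ, a * x ^ 2 + b * y ^ 2 + c * z ^ 2 + r * y * z + s * z * x + t * x * y = k) ∧
    (-A ≤ 2 * (2 * a * r - t * s) ∧ 2 * (2 * a * r - t * s) ≤ A) ∧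
    (-a ≤ t ∧ t ≤ a) ∧ (-a ≤ s ∧ s ≤ a) := by
  obtain ⟨b, c, r, s, t, ha, hA, h1, h2, x, y, z, h3⟩ := h
  obtain ⟨m, hm⟩ := near (2 * a * r - t * s) A hA
  obtain ⟨c1, hc1⟩ : ∃ c1, c1 = c + b * m ^ 2 + r * m := ⟨_, rfl⟩
  obtain ⟨r1, hr1⟩ : ∃ r1, r1 = r + 2 * b * m := ⟨_, rfl⟩
  obtain ⟨s1, hs1⟩ : ∃ s1, s1 = s + t * m := ⟨_, rfl⟩
  have h2' : 4 * a * b * c1 + r1 * s1 * t - a * r1 ^ 2 - b * s1 ^ 2 - c1 * t ^ 2 = 3 := by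
    rw [← h2, hc1, hr1, hs1]; ring
  have h3' : a * x ^ 2 + b * (y - m * z) ^ 2 + c1 * z ^ 2 + r1 * (y - m * z) * z + s1 * z * x
      + t * x * (y - m * z) = k := by
    rw [← h3, hc1, hr1, hs1]; ring
  have hB : 2 * a * r - t * s + m * A = 2 * a * r1 - t * s1 := by
    rw [hr1, hs1, ← h1]; ring
  rw [hB] at hm
  generalize y - m * z = y1 at h3'
  obtain ⟨n, hn⟩ := near t (2 * a) (by omega)
  obtain ⟨b2, hb2⟩ : ∃ b2, b2 = b + a * n ^ 2 + t * n := ⟨_, rfl⟩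
  obtain ⟨t2, ht2⟩ : ∃ t2, t2 = t + n * (2 * a) := ⟨_, rfl⟩
  obtain ⟨r2, hr2⟩ : ∃ r2, r2 = r1 + s1 * n := ⟨_, rfl⟩
  have h1'' : 4 * a * b2 - t2 ^ 2 = A := by rw [← h1, hb2, ht2]; ring
  have h2'' : 4 * a * b2 * c1 + r2 * s1 * t2 - a * r2 ^ 2 - b2 * s1 ^ 2 - c1 * t2 ^ 2 = 3 := by
    rw [← h2', hb2, hr2, ht2]; ring
  have h3'' : a * (x - n * y1) ^ 2 + b2 * y1 ^ 2 + c1 * z ^ 2 + r2 * y1 * z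
      + s1 * z * (x - n * y1) + t2 * (x - n * y1) * y1 = k := by
    rw [← h3', hb2, hr2, ht2]; ring
  have hB2 : 2 * a * r1 - t * s1 = 2 * a * r2 - t2 * s1 := by rw [hr2, ht2]; ring
  rw [hB2] at hm
  rw [← ht2] at hn
  generalize x - n * y1 = x1 at h3''
  obtain ⟨l, hl⟩ := near s1 (2 * a) (by omega)
  obtain ⟨c3, hc3⟩ : ∃ c3, c3 = c1 + a * l ^ 2 + s1 * l := ⟨_, rfl⟩
  obtain ⟨s3, hs3⟩ : ∃ s3, s3 = s1 + l * (2 * a) := ⟨_, rfl⟩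
  obtain ⟨r3, hr3⟩ : ∃ r3, r3 = r2 + t2 * l := ⟨_, rfl⟩
  refine ⟨b2, c3, r3, s3, t2, ha, hA, h1'', ?_, ⟨x1 - l * z, y1, z, ?_⟩, ?_, ?_, ?_⟩
  · rw [← h2'', hc3, hr3, hs3]; ring
  · rw [← h3'', hc3, hr3, hs3]; ring
  · have hB3 : 2 * a * r2 - t2 * s1 = 2 * a * r3 - t2 * s3 := by rw [hr3, hs3]; ring
    rwa [hB3] at hm
  · omega
  · rw [← hs3] at hl; omega

lemma a2form (y z : ℤ) : ∃ u v : ℤ, y ^ 2 + y * z + z ^ 2 = u ^ 2 + 3 * v ^ 2 := by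
  rcases Int.even_or_odd' y with ⟨i, rfl | rfl⟩
  · exact ⟨z + i, i, by ring⟩
  rcases Int.even_or_odd' z with ⟨j, rfl | rfl⟩
  · exact ⟨2 * i + 1 + j, j, by ring⟩
  · exact ⟨i - j, i + j + 1, by ring⟩

lemma a2form' (y z e : ℤ) (he : e = 1 ∨ e = -1) :
    ∃ u v : ℤ, y ^ 2 + e * y * z + z ^ 2 = u ^ 2 + 3 * v ^ 2 := by
  rcases he with rfl | rfl
  · obtain ⟨u, v, h⟩ := a2form y z
    exact ⟨u, v, by rw [← h]; ring⟩
  · obtain ⟨u, v, h⟩ := a2form y (-z)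
    exact ⟨u, v, by rw [← h]; ring⟩

lemma tS_rep {k a A : ℤ} (h : tS k a A) : ∃ x y z : ℤ, x ^ 2 + y ^ 2 + 3 * z ^ 2 = k := by
  classical
  have hE : ∃ n : ℕ, ∃ A, tS k n A := by
    refine ⟨a.toNat, A, ?_⟩
    have : 0 < a := by obtain ⟨b, c, r, s, t, ha, -⟩ := h; exact ha
    rwa [Int.toNat_of_nonneg this.le]
  have hE2 : ∃ N : ℕ, tS k (Nat.find hE) N := by
    obtain ⟨A, hA⟩ := Nat.find_spec hE
    refine ⟨A.toNat, ?_⟩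
    have : 0 < A := by obtain ⟨b, c, r, s, t, ha, hA, -⟩ := hA; exact hA
    rwa [Int.toNat_of_nonneg this.le]
  have hmin1 : ∀ a' A', tS k a' A' → ((Nat.find hE : ℕ) : ℤ) ≤ a' := by
    intro a' A' h'
    have h0 : 0 < a' := by obtain ⟨b, c, r, s, t, ha, -⟩ := h'; exact ha
    have := Nat.find_min' hE (m := a'.toNat) ⟨A', by rwa [Int.toNat_of_nonneg h0.le]⟩
    omega
  have hmin2 : ∀ A', tS k (Nat.find hE : ℕ) A' → ((Nat.find hE2 : ℕ) : ℤ) ≤ A' := by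
    intro A' h'
    have h0 : 0 < A' := by obtain ⟨b, c, r, s, t, ha, hA, -⟩ := h'; exact hA
    have := Nat.find_min' hE2 (m := A'.toNat) (by rwa [Int.toNat_of_nonneg h0.le])
    omega
  have hS := Nat.find_spec hE2
  generalize ((Nat.find hE2 : ℕ) : ℤ) = A at *
  generalize ((Nat.find hE : ℕ) : ℤ) = a at *
  obtain ⟨b, c, r, s, t, ha, hA, h1, h2, ⟨x, y, z, h3⟩, hB, ht, hs⟩ := tS_norm hS
  have hb0 : 0 < b := by
    by_contra hb
    nlinarith [sq_nonneg t, mul_nonneg ha.le (show 0 ≤ -b by omega)]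
  have hab : a ≤ b := hmin1 b A ⟨a, c, s, r, t, hb0, hA, by rw [← h1]; ring, by rw [← h2]; ring,
    y, x, z, by rw [← h3]; ring⟩
  have hAC : A * (4 * a * c - s ^ 2) = (2 * a * r - t * s) ^ 2 + 12 * a := by
    rw [← h1]; linear_combination 4 * a * h2
  have hC : 0 < 4 * a * c - s ^ 2 := by
    by_contra hC
    nlinarith [sq_nonneg (2 * a * r - t * s), mul_nonneg hA.le (show 0 ≤ -(4 * a * c - s ^ 2) by omega)]
  have hACle : A ≤ 4 * a * c - s ^ 2 := hmin2 _ ⟨c, b, r, t, s, ha, hC, rfl, by rw [← h2]; ring,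
    x, z, y, by rw [← h3]; ring⟩
  have hA16 : A ^ 2 ≤ 16 * a := by nlinarith
  have h3a : 3 * a ^ 2 ≤ A := by nlinarith
  have ha1 : a = 1 := by
    by_contra hne
    have h2a : 2 ≤ a := by omega
    have : (3 * a ^ 2) ^ 2 ≤ A ^ 2 := by gcongr
    nlinarith [pow_pos ha 2, pow_pos ha 3]
  subst ha1
  have hA4 : A ≤ 4 := by nlinarith
  obtain ⟨ht1, ht2⟩ := ht
  obtain ⟨hs1, hs2⟩ := hs
  obtain ⟨C, hCd⟩ : ∃ C, C = 4 * 1 * c - s ^ 2 := ⟨_, rfl⟩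
  obtain ⟨B, hBd⟩ : ∃ B, B = 2 * 1 * r - t * s := ⟨_, rfl⟩
  rw [← hBd] at hB hAC
  rw [← hCd] at hAC
  have hB1 : -2 ≤ B := by omega
  have hB2 : B ≤ 2 := by omega
  have key : (b = 1 ∧ c = 1) ∧ ((t = 0 ∧ s = 0 ∧ (r = 1 ∨ r = -1)) ∨
      (t = 0 ∧ r = 0 ∧ (s = 1 ∨ s = -1)) ∨ (r = 0 ∧ s = 0 ∧ (t = 1 ∨ t = -1))) := by
    interval_cases t <;> interval_cases s <;> interval_cases A <;> interval_cases B <;> omega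
  obtain ⟨⟨rfl, rfl⟩, ⟨rfl, rfl, he⟩ | ⟨rfl, rfl, he⟩ | ⟨rfl, rfl, he⟩⟩ := key
  · obtain ⟨u, v, h⟩ := a2form' y z r he
    exact ⟨x, u, v, by linear_combination h3 - h⟩
  · obtain ⟨u, v, h⟩ := a2form' z x s he
    exact ⟨y, u, v, by linear_combination h3 - h⟩
  · obtain ⟨u, v, h⟩ := a2form' x y t he
    exact ⟨z, u, v, by linear_combination h3 - h⟩

open scoped NumberTheorySymbols in
lemma sq_of_jac {p : ℕ} (hp : p.Prime) (e : ℤ) (h : J(-e | p) = 1) :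
    ∃ u b : ℤ, u ^ 2 + e = p * b := by
  have := Fact.mk hp
  obtain ⟨q, hq⟩ := ZMod.isSquare_of_jacobiSym_eq_one h
  obtain ⟨u, rfl⟩ := ZMod.intCast_surjective q
  have : ((u ^ 2 + e : ℤ) : ZMod p) = 0 := by
    push_cast at hq ⊢
    linear_combination -hq
  rw [ZMod.intCast_zmod_eq_zero_iff_dvd] at this
  obtain ⟨b, hb⟩ := this
  exact ⟨u, b, hb⟩

open scoped NumberTheorySymbols in
lemma rep1 (k : ℕ) (hk : 0 < k) (h3 : k % 3 ≠ 0) :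
    ∃ x y z : ℤ, x ^ 2 + y ^ 2 + 3 * z ^ 2 = k := by
  have hcop : Nat.Coprime (4 * k) (4 * k - 3) := by
    have hc3 : Nat.Coprime 3 (4 * k) := by
      rw [Nat.Prime.coprime_iff_not_dvd Nat.prime_three]; omega
    have : (4 * k) = (4 * k - 3) + 3 := by omega
    generalize 4 * k - 3 = w at *
    rw [this] at hc3 ⊢
    simpa [Nat.coprime_comm] using hc3
  have hcop' : Nat.Coprime k (4 * k - 3) := Nat.Coprime.coprime_mul_left hcop
  have hε : J((k : ℤ) | 4 * k - 3) = 1 ∨ J((k : ℤ) | 4 * k - 3) = -1 :=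
    jacobiSym.eq_one_or_neg_one (by simpa using hcop')
  obtain ⟨j, hj⟩ : ∃ j : ℕ, ((4 * k - 3 + 4 * k * j) % 3 = 1 ∧ J((k : ℤ) | 4 * k - 3) = 1) ∨
      ((4 * k - 3 + 4 * k * j) % 3 = 2 ∧ J((k : ℤ) | 4 * k - 3) = -1) := by
    have : k % 3 = 1 ∨ k % 3 = 2 := by omega
    rcases hε with h | h <;> rcases this with h' | h'
    · exact ⟨0, Or.inl ⟨by omega, h⟩⟩
    · exact ⟨1, Or.inl ⟨by omega, h⟩⟩
    · exact ⟨1, Or.inr ⟨by omega, h⟩⟩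
    · exact ⟨0, Or.inr ⟨by omega, h⟩⟩
  have hwc : Nat.Coprime (4 * k - 3 + 4 * k * j) (4 * k * 3) := by
    apply Nat.Coprime.mul_right
    · simpa [Nat.coprime_comm] using hcop
    · rw [Nat.coprime_comm, Nat.Prime.coprime_iff_not_dvd Nat.prime_three]; omega
  obtain ⟨p, hpgt, hp, hpw⟩ := Nat.forall_exists_prime_gt_and_modEq (4 * k - 3 + 4 * k * j)
    (show 4 * k * 3 ≠ 0 by omega) hwc
  obtain ⟨i, hi⟩ : ∃ i, p = 4 * k - 3 + 4 * k * i := by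
    obtain ⟨c, hc⟩ := (Nat.modEq_iff_dvd' hpgt.le).1 hpw.symm
    refine ⟨j + 3 * c, ?_⟩
    have : p = 4 * k - 3 + 4 * k * j + 4 * k * 3 * c := by omega
    rw [this]; ring
  have hp3 : p % 3 = (4 * k - 3 + 4 * k * j) % 3 := hpw.of_mul_left _
  have hp4 : p % 4 = 1 := by
    rw [hi, mul_assoc]; omega
  have hodd : Odd p := Nat.odd_iff.2 (by omega)
  have hJ1 : J((k : ℤ) | p) = J((k : ℤ) | 4 * k - 3) := by
    rw [jacobiSym.mod_right' k hodd, hi, Nat.add_mul_mod_self_left, Nat.mod_eq_of_lt (by omega)]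
  have hm1 : J(-1 | p) = 1 := by
    rw [jacobiSym.at_neg_one hodd, ZMod.χ₄_nat_one_mod_four hp4]
  have hJ3 : J(-3 | p) = J((p : ℤ) | 3) := by
    rw [show (-3 : ℤ) = -1 * ((3 : ℕ) : ℤ) by norm_num, jacobiSym.mul_left, hm1, one_mul,
      jacobiSym.quadratic_reciprocity_one_mod_four' (by decide) hp4]
  have hprod : J(-3 | p) * J((k : ℤ) | p) = 1 := by
    rw [hJ3, hJ1, jacobiSym.mod_left]
    rcases hj with ⟨h, h'⟩ | ⟨h, h'⟩
    · rw [h', show ((p : ℤ) % (3 : ℕ)) = 1 by omega]; simp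
    · rw [h', show ((p : ℤ) % (3 : ℕ)) = 2 by omega]; norm_num
  obtain ⟨e, he⟩ : ∃ e : ℤ, e = i + 1 := ⟨_, rfl⟩
  have hpe : (p : ℤ) = 4 * k * e - 3 := by
    rw [hi, he]; push_cast [show 3 ≤ 4 * k by omega]; ring
  have hJe : J(-e | p) = 1 := by
    have h1 : J(-e | p) * (J(4 | p) * J((k : ℤ) | p)) = J(-3 | p) := by
      rw [← jacobiSym.mul_left, ← jacobiSym.mul_left]
      apply jacobiSym.mod_left'
      rw [show -e * (4 * k) = -3 + (p : ℤ) * (-1) by rw [hpe]; ring, Int.add_mul_emod_self_left]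
    rw [jacobiSym.at_four hodd, one_mul] at h1
    have h2 : J((k : ℤ) | p) * J((k : ℤ) | p) = 1 := by
      rw [hJ1]; rcases hε with h | h <;> rw [h] <;> norm_num
    calc J(-e | p) = J(-e | p) * (J((k : ℤ) | p) * J((k : ℤ) | p)) := by rw [h2, mul_one]
      _ = 1 := by rw [← mul_assoc, h1, hprod]
  obtain ⟨u, b, hub⟩ := sq_of_jac hp e hJe
  have hp0 : (0 : ℤ) < p := by exact_mod_cast hp.pos
  refine tS_rep (a := p) (A := 4 * e) ⟨b, k, 1, 0, 2 * u, hp0, by omega, ?_, ?_, 0, 0, 1, by ring⟩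
  · linear_combination -4 * hub
  · linear_combination (-4 * (k : ℤ)) * hub - hpe

open scoped NumberTheorySymbols in
lemma rep3 (m : ℕ) (h3 : m % 3 = 1) :
    ∃ x y z : ℤ, x ^ 2 + y ^ 2 + 3 * z ^ 2 = 3 * (m : ℤ) := by
  obtain ⟨w, hw⟩ : ∃ w, 3 * w = 4 * m - 1 := ⟨(4 * m - 1) / 3, by omega⟩
  have hcop : Nat.Coprime w (4 * m) := by
    have : Nat.Coprime (3 * w) (3 * w + 1) := by simp
    rw [show 3 * w + 1 = 4 * m by omega] at this
    exact Nat.Coprime.coprime_mul_left this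
  obtain ⟨p, hpgt, hp, hpw⟩ := Nat.forall_exists_prime_gt_and_modEq w
    (show 4 * m ≠ 0 by omega) hcop
  obtain ⟨i, hi⟩ : ∃ i, p = w + 4 * m * i := by
    obtain ⟨c, hc⟩ := (Nat.modEq_iff_dvd' hpgt.le).1 hpw.symm
    exact ⟨c, by omega⟩
  have hp4 : p % 4 = 1 := by
    rw [hi, mul_assoc]; omega
  have hodd : Odd p := Nat.odd_iff.2 (by omega)
  have hm1 : J(-1 | p) = 1 := by
    rw [jacobiSym.at_neg_one hodd, ZMod.χ₄_nat_one_mod_four hp4]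
  have hJ1 : J((m : ℤ) | p) = 1 := by
    have h1 : J((m : ℤ) | 3 * p) = J((m : ℤ) | 4 * m - 1) := by
      rw [jacobiSym.mod_right' m (by rw [Nat.odd_iff]; omega), hi,
        show 3 * (w + 4 * m * i) = (4 * m - 1) + 4 * m * (3 * i) by rw [← hw]; ring,
        Nat.add_mul_mod_self_left, Nat.mod_eq_of_lt (by omega)]
    have hodd' : Odd (4 * m - 1) := by rw [Nat.odd_iff]; omega
    have h2 : J((m : ℤ) | 4 * m - 1) = 1 := by
      rw [← one_mul J((m : ℤ) | 4 * m - 1), ← jacobiSym.at_four hodd', ← jacobiSym.mul_left,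
        jacobiSym.at_four hodd', ← jacobiSym.one_left (4 * m - 1)]
      apply jacobiSym.mod_left'
      rw [show (4 * m : ℤ) = 1 + ((4 * m - 1 : ℕ) : ℤ) * 1 by omega, Int.add_mul_emod_self_left]
    have h4 : J((m : ℤ) | 3) = 1 := by
      rw [jacobiSym.mod_left, show ((m : ℤ) % (3 : ℕ)) = 1 by omega]; simp
    rw [jacobiSym.mul_right' _ (by norm_num) hp.ne_zero, h4, one_mul, h2] at h1
    exact h1
  obtain ⟨e, he⟩ : ∃ e : ℤ, e = 3 * i + 1 := ⟨_, rfl⟩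
  have hw' : 3 * (w : ℤ) = 4 * m - 1 := by omega
  have hpe : 3 * (p : ℤ) = 4 * m * e - 1 := by
    rw [hi, he]; push_cast; linear_combination hw'
  have hJe : J(-e | p) = 1 := by
    have h1 : J(-e | p) * (J(4 | p) * J((m : ℤ) | p)) = J(-1 | p) := by
      rw [← jacobiSym.mul_left, ← jacobiSym.mul_left]
      apply jacobiSym.mod_left'
      rw [show -e * (4 * m) = -1 + (p : ℤ) * (-3) by linear_combination 3 * hpe - 2 * hpe,
        Int.add_mul_emod_self_left]
    rwa [jacobiSym.at_four hodd, one_mul, hJ1, mul_one, hm1] at h1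
  obtain ⟨u, b, hub⟩ := sq_of_jac hp e hJe
  have hp0 : (0 : ℤ) < p := by exact_mod_cast hp.pos
  refine tS_rep (a := p) (A := 4 * e)
    ⟨b, 3 * m, 3, 0, 2 * u, hp0, by omega, ?_, ?_, 0, 0, 1, by ring⟩
  · linear_combination -4 * hub
  · linear_combination (-12 * (m : ℤ)) * hub - 3 * hpe

lemma sq3 (x : ℤ) : (x % 3 = 0 ∧ x ^ 2 % 3 = 0) ∨ (x % 3 ≠ 0 ∧ x ^ 2 % 3 = 1) := by
  have h : x % 3 = 0 ∨ x % 3 = 1 ∨ x % 3 = 2 := by omega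
  rcases h with h | h | h <;> simp [h, pow_two, Int.mul_emod]

lemma sq4 (x : ℤ) : (x % 2 = 0 ∧ x ^ 2 % 4 = 0) ∨ (x % 2 = 1 ∧ x ^ 2 % 4 = 1) := by
  rcases Int.even_or_odd' x with ⟨i, rfl | rfl⟩
  · left; refine ⟨by omega, ?_⟩
    rw [show (2 * i) ^ 2 = 4 * i ^ 2 by ring]; omega
  · right; refine ⟨by omega, ?_⟩
    rw [show (2 * i + 1) ^ 2 = 4 * (i ^ 2 + i) + 1 by ring]; omega

lemma oct (w : ℤ) (h : w % 3 ≠ 0) : ∃ z : ℤ, w ^ 2 = 3 * (3 * z ^ 2 - 2 * z) + 1 := by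
  have h : w % 3 = 1 ∨ w % 3 = 2 := by omega
  rcases h with h | h
  · obtain ⟨j, rfl⟩ : ∃ j, w = 3 * j + 1 := ⟨w / 3, by omega⟩
    exact ⟨-j, by ring⟩
  · obtain ⟨j, rfl⟩ : ∃ j, w = 3 * j - 1 := ⟨(w + 1) / 3, by omega⟩
    exact ⟨j, by ring⟩

lemma mul3 (w : ℤ) (h : w % 3 = 0) : ∃ j, w = 3 * j := ⟨w / 3, by omega⟩

lemma halves (a b : ℤ) (h : a % 2 = b % 2) : ∃ u v : ℤ, a = u + v ∧ b = u - v :=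
  ⟨(a + b) / 2, (a - b) / 2, by omega, by omega⟩

lemma formF (k : ℤ) (hk : 0 < k) (h : k % 3 ≠ 0) : ∃ x y z : ℤ, x ^ 2 + y ^ 2 + 3 * z ^ 2 = k := by
  obtain ⟨n, rfl⟩ := Int.eq_ofNat_of_zero_le hk.le
  exact rep1 n (by omega) (by omega)

lemma formG (k : ℤ) (hk : 0 < k) (h : k % 3 = 1) :
    ∃ x y z : ℤ, x ^ 2 + 3 * y ^ 2 + 3 * z ^ 2 = k := by
  obtain ⟨n, rfl⟩ := Int.eq_ofNat_of_zero_le hk.le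
  obtain ⟨x, y, z, hxyz⟩ := rep3 n (by omega)
  have hx := sq3 x
  have hy := sq3 y
  obtain ⟨i, rfl⟩ := mul3 x (by omega)
  obtain ⟨j, rfl⟩ := mul3 y (by omega)
  exact ⟨z, i, j, by linarith⟩

lemma formH (k : ℤ) (hk : 0 < k) (h : k % 3 ≠ 0) :
    ∃ x y z : ℤ, x ^ 2 + y ^ 2 + 6 * z ^ 2 = k := by
  rcases Int.even_or_odd' k with ⟨m, hm | hm⟩
  · obtain ⟨x, y, z, hxyz⟩ := formF m (by omega) (by omega)
    exact ⟨x + y, x - y, z, by linarith⟩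
  · obtain ⟨x, y, z, hxyz⟩ := formF (2 * k) (by omega) (by omega)
    have hx := sq4 x
    have hy := sq4 y
    have hz := sq4 z
    obtain ⟨u, v, rfl, rfl⟩ := halves x y (by omega)
    obtain ⟨w, rfl⟩ : ∃ w, z = 2 * w := ⟨z / 2, by omega⟩
    exact ⟨u, v, w, by linarith⟩

lemma formK (k : ℤ) (hk : 0 < k) (h : k % 3 = 2) :
    ∃ x y z : ℤ, 2 * x ^ 2 + 3 * y ^ 2 + 3 * z ^ 2 = k := by
  rcases Int.even_or_odd' k with ⟨m, hm | hm⟩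
  · obtain ⟨x, y, z, hxyz⟩ := formG m (by omega) (by omega)
    exact ⟨x, y + z, y - z, by linarith⟩
  · obtain ⟨z, x, y, hxyz⟩ := formG (2 * k) (by omega) (by omega)
    have hx := sq4 x
    have hy := sq4 y
    have hz := sq4 z
    obtain ⟨u, v, rfl, rfl⟩ := halves x y (by omega)
    obtain ⟨w, rfl⟩ : ∃ w, z = 2 * w := ⟨z / 2, by omega⟩
    exact ⟨w, u, v, by linarith⟩

lemma pos1 (N : ℤ) (hN : 0 ≤ N) : ∃ x y z : ℤ, x ^ 2 + y ^ 2 + (3 * z ^ 2 - 2 * z) = N := by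
  obtain ⟨w, x, y, h⟩ := formG (3 * N + 1) (by omega) (by omega)
  obtain ⟨z, hz⟩ := oct w (by have := sq3 w; omega)
  exact ⟨x, y, z, by linarith⟩

lemma pos2 (N : ℤ) (hN : 0 ≤ N) : ∃ x y z : ℤ, x ^ 2 + y ^ 2 + 2 * (3 * z ^ 2 - 2 * z) = N := by
  obtain ⟨w, x, y, h⟩ := formK (3 * N + 2) (by omega) (by omega)
  obtain ⟨z, hz⟩ := oct w (by have := sq3 w; omega)
  exact ⟨x, y, z, by linarith⟩

lemma pos3 (N : ℤ) (hN : 0 ≤ N) : ∃ x y z : ℤ, x ^ 2 + 3 * y ^ 2 + (3 * z ^ 2 - 2 * z) = N := by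
  obtain ⟨w, t, x, h⟩ := formF (3 * N + 1) (by omega) (by omega)
  have hw := sq3 w
  have ht := sq3 t
  rcases (show (w % 3 ≠ 0 ∧ t % 3 = 0) ∨ (w % 3 = 0 ∧ t % 3 ≠ 0) by omega) with ⟨h1, h2⟩ | ⟨h2, h1⟩
  · obtain ⟨z, hz⟩ := oct w h1
    obtain ⟨y, rfl⟩ := mul3 t h2
    exact ⟨x, y, z, by linarith⟩
  · obtain ⟨z, hz⟩ := oct t h1
    obtain ⟨y, rfl⟩ := mul3 w h2
    exact ⟨x, y, z, by linarith⟩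

lemma pos4 (N : ℤ) (hN : 0 ≤ N) :
    ∃ x y z : ℤ, x ^ 2 + ((3 * y ^ 2 - 2 * y) + (3 * z ^ 2 - 2 * z)) = N := by
  obtain ⟨w, t, x, h⟩ := formF (3 * N + 2) (by omega) (by omega)
  have hw := sq3 w
  have ht := sq3 t
  obtain ⟨z, hz⟩ := oct w (by omega)
  obtain ⟨y, hy⟩ := oct t (by omega)
  exact ⟨x, y, z, by linarith⟩

lemma pos5 (N : ℤ) (hN : 0 ≤ N) :
    ∃ x y z : ℤ, 2 * x ^ 2 + 3 * y ^ 2 + (3 * z ^ 2 - 2 * z) = N := by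
  obtain ⟨w, t, x, h⟩ := formH (3 * N + 1) (by omega) (by omega)
  have hw := sq3 w
  have ht := sq3 t
  rcases (show (w % 3 ≠ 0 ∧ t % 3 = 0) ∨ (w % 3 = 0 ∧ t % 3 ≠ 0) by omega) with ⟨h1, h2⟩ | ⟨h2, h1⟩
  · obtain ⟨z, hz⟩ := oct w h1
    obtain ⟨y, rfl⟩ := mul3 t h2
    exact ⟨x, y, z, by linarith⟩
  · obtain ⟨z, hz⟩ := oct t h1
    obtain ⟨y, rfl⟩ := mul3 w h2
    exact ⟨x, y, z, by linarith⟩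

lemma pos6 (N : ℤ) (hN : 0 ≤ N) :
    ∃ x y z : ℤ, 2 * x ^ 2 + ((3 * y ^ 2 - 2 * y) + (3 * z ^ 2 - 2 * z)) = N := by
  obtain ⟨w, t, x, h⟩ := formH (3 * N + 2) (by omega) (by omega)
  have hw := sq3 w
  have ht := sq3 t
  obtain ⟨z, hz⟩ := oct w (by omega)
  obtain ⟨y, hy⟩ := oct t (by omega)
  exact ⟨x, y, z, by linarith⟩

/-- bounded representability by value lists -/
def repB (L₁ L₂ L₃ : List ℕ) (a b c N : ℕ) : Bool :=
  L₁.any fun x => L₂.any fun y => L₃.any fun z => Nat.beq (a * x + b * y + c * z) N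

def uniB (L₁ L₂ L₃ : List ℕ) (M a b c : ℕ) : Bool :=
  (List.range (M + 1)).all fun N => repB L₁ L₂ L₃ a b c N

def goodVals (f : ℤ → ℤ) (L : List ℕ) : Prop :=
  ∀ x, 0 ≤ f x ∧ (f x ≤ 18 → (f x).toNat ∈ L)

lemma good4 : goodVals (fun t => t ^ 2) [0, 1, 4, 9, 16] := by
  intro x
  refine ⟨sq_nonneg x, fun h => ?_⟩
  simp only at h ⊢
  have h1 : x ≤ 4 := by nlinarith
  have h2 : -4 ≤ x := by nlinarith
  interval_cases x <;> decide

lemma good8 : goodVals (fun t => 3 * t ^ 2 - 2 * t) [0, 1, 5, 8, 16] := by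
  intro x
  refine ⟨?_, fun h => ?_⟩
  · simp only
    rcases le_or_gt x 0 with h | h <;> nlinarith
  simp only at h ⊢
  have h1 : x ≤ 3 := by nlinarith
  have h2 : -3 ≤ x := by nlinarith
  interval_cases x <;> first | decide | omega

lemma cap1 (a x M : ℕ) (h : a * x ≤ M) : min a (M + 1) * x = a * x := by
  rcases le_or_gt a M with h' | h'
  · rw [min_eq_left (by omega)]
  · have : x = 0 := by
      by_contra hx
      have : 1 ≤ x := by omega
      nlinarith
    simp [this]

lemma uni_of {f g h : ℤ → ℤ} {L₁ L₂ L₃ : List ℕ} (hf : goodVals f L₁) (hg : goodVals g L₂)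
    (hh : goodVals h L₃) {a b c : ℤ} (ha : 0 < a) (hb : 0 < b) (hc : 0 < c)
    (H : ∀ N : ℤ, 0 ≤ N → ∃ x y z, a * f x + b * g y + c * h z = N) (M : ℕ) (hM : M ≤ 18) :
    uniB L₁ L₂ L₃ M (min a.toNat (M + 1)) (min b.toNat (M + 1)) (min c.toNat (M + 1)) = true := by
  rw [uniB, List.all_eq_true]
  intro N hN
  rw [List.mem_range] at hN
  obtain ⟨x, y, z, e⟩ := H N (by omega)
  obtain ⟨fx0, fx⟩ := hf x
  obtain ⟨gy0, gy⟩ := hg y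
  obtain ⟨hz0, hz⟩ := hh z
  generalize f x = X at *
  generalize g y = Y at *
  generalize h z = Z at *
  lift X to ℕ using fx0
  lift Y to ℕ using gy0
  lift Z to ℕ using hz0
  lift a to ℕ using ha.le
  lift b to ℕ using hb.le
  lift c to ℕ using hc.le
  simp only [Int.toNat_natCast] at *
  norm_cast at e ha hb hc
  have e1 : a * X ≤ M := by have := Nat.zero_le (b * Y); have := Nat.zero_le (c * Z); omega
  have e2 : b * Y ≤ M := by have := Nat.zero_le (a * X); have := Nat.zero_le (c * Z); omega
  have e3 : c * Z ≤ M := by have := Nat.zero_le (b * Y); have := Nat.zero_le (a * X); omega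
  simp only [repB, List.any_eq_true]
  refine ⟨X, fx ?_, Y, gy ?_, Z, hz ?_, ?_⟩
  · have : X ≤ a * X := Nat.le_mul_of_pos_left _ ha
    omega
  · have : Y ≤ b * Y := Nat.le_mul_of_pos_left _ hb
    omega
  · have : Z ≤ c * Z := Nat.le_mul_of_pos_left _ hc
    omega
  · rw [cap1 _ _ _ e1, cap1 _ _ _ e2, cap1 _ _ _ e3, e]
    simp

def stage1 (L₁ L₂ L₃ : List ℕ) : Bool :=
  (List.range 6).all fun a => (List.range 6).all fun b => (List.range 6).all fun c =>
    !(uniB L₁ L₂ L₃ 5 (a + 1) (b + 1) (c + 1)) || (Nat.blt a 5 && Nat.blt b 5 && Nat.blt c 5)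

def stage2 (L₁ L₂ L₃ : List ℕ) (T : List (ℕ × ℕ × ℕ)) : Bool :=
  (List.range 5).all fun a => (List.range 5).all fun b => (List.range 5).all fun c =>
    !(uniB L₁ L₂ L₃ 18 (a + 1) (b + 1) (c + 1)) || T.any fun t =>
      Nat.beq t.1 (a + 1) && Nat.beq t.2.1 (b + 1) && Nat.beq t.2.2 (c + 1)

lemma classify {f g h : ℤ → ℤ} {L₁ L₂ L₃ : List ℕ} (hf : goodVals f L₁) (hg : goodVals g L₂)
    (hh : goodVals h L₃) (T : List (ℕ × ℕ × ℕ))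
    (s1 : stage1 L₁ L₂ L₃ = true) (s2 : stage2 L₁ L₂ L₃ T = true)
    {a b c : ℤ} (ha : 0 < a) (hb : 0 < b) (hc : 0 < c)
    (H : ∀ N : ℤ, 0 ≤ N → ∃ x y z, a * f x + b * g y + c * h z = N) :
    ∃ t ∈ T, a = t.1 ∧ b = t.2.1 ∧ c = t.2.2 := by
  have u1 := uni_of hf hg hh ha hb hc H 5 (by omega)
  have u2 := uni_of hf hg hh ha hb hc H 18 (by omega)
  simp only [stage1, List.all_eq_true, List.mem_range] at s1
  have v1 := s1 (min a.toNat 6 - 1) (by omega) (min b.toNat 6 - 1) (by omega)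
    (min c.toNat 6 - 1) (by omega)
  rw [show min a.toNat 6 - 1 + 1 = min a.toNat 6 by omega,
    show min b.toNat 6 - 1 + 1 = min b.toNat 6 by omega,
    show min c.toNat 6 - 1 + 1 = min c.toNat 6 by omega, u1] at v1
  simp only [Bool.not_true, Bool.false_or, Bool.and_eq_true, Nat.blt_eq] at v1
  simp only [stage2, List.all_eq_true, List.mem_range] at s2
  have v2 := s2 (a.toNat - 1) (by omega) (b.toNat - 1) (by omega) (c.toNat - 1) (by omega)
  rw [show min a.toNat (18 + 1) = a.toNat by omega, show min b.toNat (18 + 1) = b.toNat by omega,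
    show min c.toNat (18 + 1) = c.toNat by omega] at u2
  rw [show a.toNat - 1 + 1 = a.toNat by omega, show b.toNat - 1 + 1 = b.toNat by omega,
    show c.toNat - 1 + 1 = c.toNat by omega, u2] at v2
  simp only [Bool.not_true, Bool.false_or, List.any_eq_true, Bool.and_eq_true, Nat.beq_eq] at v2
  obtain ⟨t, ht, h1⟩ := v2
  exact ⟨t, ht, by omega, by omega, by omega⟩

lemma mr30 {a b c N : ℤ} (h : mixedRepresents [a, b, c] [] N) :
    ∃ x y z : ℤ, a * x ^ 2 + b * y ^ 2 + c * z ^ 2 = N := by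
  obtain ⟨x, y, hx, hy, h⟩ := h
  match x, y, hx, hy, h with
  | [x, y, z], [], _, _, h => exact ⟨x, y, z, by simpa [add_assoc] using h⟩

lemma mr21 {a b c N : ℤ} (h : mixedRepresents [a, b] [c] N) :
    ∃ x y z : ℤ, a * x ^ 2 + b * y ^ 2 + c * (3 * z ^ 2 - 2 * z) = N := by
  obtain ⟨x, y, hx, hy, h⟩ := h
  match x, y, hx, hy, h with
  | [x, y], [z], _, _, h => exact ⟨x, y, z, by simpa [add_assoc] using h⟩

lemma mr12 {a b c N : ℤ} (h : mixedRepresents [a] [b, c] N) :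
    ∃ x y z : ℤ, a * x ^ 2 + b * (3 * y ^ 2 - 2 * y) + c * (3 * z ^ 2 - 2 * z) = N := by
  obtain ⟨x, y, hx, hy, h⟩ := h
  match x, y, hx, hy, h with
  | [x], [y, z], _, _, h => exact ⟨x, y, z, by simpa [add_assoc] using h⟩

lemma mr03 {a b c N : ℤ} (h : mixedRepresents [] [a, b, c] N) :
    ∃ x y z : ℤ, a * (3 * x ^ 2 - 2 * x) + b * (3 * y ^ 2 - 2 * y)
      + c * (3 * z ^ 2 - 2 * z) = N := by
  obtain ⟨x, y, hx, hy, h⟩ := h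
  match x, y, hx, hy, h with
  | [], [x, y, z], _, _, h => exact ⟨x, y, z, by simpa [add_assoc] using h⟩

theorem ternary_universal_classification (a b : List ℤ)
    (ha : ∀ c ∈ a, 0 < c) (hb : ∀ c ∈ b, 0 < c)
    (ha' : a.Pairwise (· ≤ ·)) (hb' : b.Pairwise (· ≤ ·))
    (hlen : a.length + b.length = 3) :
    mixedUniversal a b ↔
      (a, b) ∈ ([([1, 1], [1]), ([1, 1], [2]), ([1, 3], [1]), ([1], [1, 1]),
        ([2, 3], [1]), ([2], [1, 1])] : List (List ℤ × List ℤ)) := by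
  constructor
  · intro H
    rcases a with _ | ⟨a1, _ | ⟨a2, _ | ⟨a3, _ | ⟨a4, a⟩⟩⟩⟩ <;>
    rcases b with _ | ⟨b1, _ | ⟨b2, _ | ⟨b3, _ | ⟨b4, b⟩⟩⟩⟩ <;>
    try (exfalso; simp only [List.length_cons, List.length_nil] at hlen; first | done | omega)
    · simp only [List.mem_cons, List.not_mem_nil, or_false, forall_eq_or_imp, forall_eq] at hb
      obtain ⟨t, ht, -⟩ := classify good8 good8 good8 [] (by decide +kernel) (by decide +kernel)
        hb.1 hb.2.1 hb.2.2 (fun N hN => mr03 (H N hN))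
      simp at ht
    · simp only [List.mem_cons, List.not_mem_nil, or_false, forall_eq_or_imp, forall_eq] at ha hb
      obtain ⟨t, ht, h1, h2, h3⟩ := classify good4 good8 good8
        [(1, 1, 1), (2, 1, 1)]
        (by decide +kernel) (by decide +kernel) ha hb.1 hb.2 (fun N hN => mr12 (H N hN))
      simp only [List.mem_cons, List.not_mem_nil, or_false] at ht
      rcases ht with rfl | rfl <;> simp only at h1 h2 h3 <;> subst h1 h2 h3 <;> simp
    · simp only [List.mem_cons, List.not_mem_nil, or_false, forall_eq_or_imp, forall_eq] at ha hb
      obtain ⟨t, ht, h1, h2, h3⟩ := classify good4 good4 good8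
        [(1, 1, 1), (1, 1, 2), (1, 3, 1), (2, 3, 1), (3, 1, 1), (3, 2, 1)]
        (by decide +kernel) (by decide +kernel) ha.1 ha.2 hb (fun N hN => mr21 (H N hN))
      simp only [List.pairwise_cons, List.mem_cons, List.not_mem_nil, or_false, forall_eq] at ha'
      have hab := ha'.1
      simp only [List.mem_cons, List.not_mem_nil, or_false] at ht
      rcases ht with rfl | rfl | rfl | rfl | rfl | rfl <;> simp only at h1 h2 h3 <;> subst h1 h2 h3
        <;> first | (exfalso; omega) | simp
    · simp only [List.mem_cons, List.not_mem_nil, or_false, forall_eq_or_imp, forall_eq] at ha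
      obtain ⟨t, ht, -⟩ := classify good4 good4 good4 [] (by decide +kernel) (by decide +kernel)
        ha.1 ha.2.1 ha.2.2 (fun N hN => mr30 (H N hN))
      simp at ht
  · intro h N hN
    simp only [List.mem_cons, List.not_mem_nil, or_false, Prod.mk.injEq] at h
    rcases h with ⟨rfl, rfl⟩ | ⟨rfl, rfl⟩ | ⟨rfl, rfl⟩ | ⟨rfl, rfl⟩ | ⟨rfl, rfl⟩ | ⟨rfl, rfl⟩
    · obtain ⟨x, y, z, h⟩ := pos1 N hN
      exact ⟨[x, y], [z], rfl, rfl, by simpa using h⟩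
    · obtain ⟨x, y, z, h⟩ := pos2 N hN
      exact ⟨[x, y], [z], rfl, rfl, by simpa using h⟩
    · obtain ⟨x, y, z, h⟩ := pos3 N hN
      exact ⟨[x, y], [z], rfl, rfl, by simpa using h⟩
    · obtain ⟨x, y, z, h⟩ := pos4 N hN
      exact ⟨[x], [y, z], rfl, rfl, by simpa using h⟩
    · obtain ⟨x, y, z, h⟩ := pos5 N hN
      exact ⟨[x, y], [z], rfl, rfl, by simpa using h⟩
    · obtain ⟨x, y, z, h⟩ := pos6 N hN
      exact ⟨[x], [y, z], rfl, rfl, by simpa using h⟩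
end

section
/- Let α₁,…,α_u and β₁,…,β_v be positive integers. The mixed sum Φ = α₁P₄(x₁)+⋯+α_uP₄(x_u)+β₁P₈(y₁)+⋯+β_vP₈(y_v) is universal if and only if for every nonnegative integer N the equation 3α₁x₁²+⋯+3α_ux_u²+β₁y₁²+⋯+β_vy_v² = 3N+β₁+⋯+β_v has an integer solution (x₁,…,x_u,y₁,…,y_v) ∈ ℤ^{u+v} with y₁⋯y_v ≢ 0 (mod 3) (i.e., no y_i is divisible by 3). -/
theorem aux_sq (a : List ℤ) : ∀ x : List ℤ,
    (List.zipWith (fun c t => 3 * c * t ^ 2) a x).sum =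
      3 * (List.zipWith (fun c t => c * t ^ 2) a x).sum := by
  induction a with
  | nil => intro x; simp
  | cons c a ih =>
    intro x
    cases x with
    | nil => simp
    | cons t x =>
      simp only [List.zipWith_cons_cons, List.sum_cons, ih x]
      ring

theorem aux_fwd (b : List ℤ) : ∀ y : List ℤ, y.length = b.length →
    (List.zipWith (fun c t => c * t ^ 2) b (y.map (fun t => 3 * t - 1))).sum =
      3 * (List.zipWith (fun c t => c * (3 * t ^ 2 - 2 * t)) b y).sum + b.sum := by
  induction b with
  | nil => intro y _; simp
  | cons c b ih =>
    intro y hy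
    cases y with
    | nil => simp at hy
    | cons t y =>
      simp only [List.length_cons, Nat.add_right_cancel_iff] at hy
      simp only [List.map_cons, List.zipWith_cons_cons, List.sum_cons, ih y hy]
      ring

theorem aux_bwd (b : List ℤ) : ∀ y : List ℤ, y.length = b.length →
    (∀ t ∈ y, ¬ (3 : ℤ) ∣ t) → ∃ z : List ℤ, z.length = b.length ∧
    (List.zipWith (fun c t => c * t ^ 2) b y).sum =
      3 * (List.zipWith (fun c t => c * (3 * t ^ 2 - 2 * t)) b z).sum + b.sum := by
  induction b with
  | nil => intro y _ _; exact ⟨[], by simp⟩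
  | cons c b ih =>
    intro y hy h3
    cases y with
    | nil => simp at hy
    | cons t y =>
      simp only [List.length_cons, Nat.add_right_cancel_iff] at hy
      obtain ⟨z, hz, e⟩ := ih y hy (fun s hs => h3 s (List.mem_cons_of_mem _ hs))
      have ht : ¬ (3 : ℤ) ∣ t := h3 t List.mem_cons_self
      have : ∃ s : ℤ, t = 3 * s - 1 ∨ t = -(3 * s - 1) := by
        rcases (by omega : t % 3 = 1 ∨ t % 3 = 2) with h | h
        · exact ⟨-(t / 3), by omega⟩
        · exact ⟨t / 3 + 1, by omega⟩
      obtain ⟨s, hs⟩ := this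
      have hq : t ^ 2 = 3 * (3 * s ^ 2 - 2 * s) + 1 := by
        rcases hs with rfl | rfl <;> ring
      refine ⟨s :: z, by simp [hz], ?_⟩
      simp only [List.zipWith_cons_cons, List.sum_cons, e, hq]
      ring

theorem universal_iff_congruence_representation (a b : List ℤ)
    (ha : ∀ c ∈ a, 0 < c) (hb : ∀ c ∈ b, 0 < c) :
    mixedUniversal a b ↔
      ∀ N : ℤ, 0 ≤ N →
        ∃ x y : List ℤ, x.length = a.length ∧ y.length = b.length ∧
          (∀ t ∈ y, ¬ (3 : ℤ) ∣ t) ∧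
          (List.zipWith (fun c t => 3 * c * t ^ 2) a x).sum +
            (List.zipWith (fun c t => c * t ^ 2) b y).sum = 3 * N + b.sum := by
  constructor
  · intro h N hN
    obtain ⟨x, y, hx, hy, e⟩ := h N hN
    refine ⟨x, y.map (fun t => 3 * t - 1), hx, by simpa using hy, ?_, ?_⟩
    · intro t ht
      obtain ⟨s, _, rfl⟩ := List.mem_map.1 ht
      omega
    · rw [aux_sq, aux_fwd b y hy, ← e]
      ring
  · intro h N hN
    obtain ⟨x, y, hx, hy, h3, e⟩ := h N hN
    obtain ⟨z, hz, e2⟩ := aux_bwd b y hy h3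
    refine ⟨x, z, hx, hz, ?_⟩
    rw [aux_sq, e2] at e
    linarith
end

section
/- For each β ∈ {1, 2} and every nonnegative integer N, the equation x² + y² + β(3z² − 2z) = N has an integer solution (x, y, z) ∈ ℤ³. That is, the ternary mixed sums x²+y²+P₈(z) and x²+y²+2P₈(z) of generalized 4- and 8-gonal numbers are universal. -/
def TQ (a b c d e f x y z : ℤ) : ℤ :=
  a * x ^ 2 + b * y ^ 2 + c * z ^ 2 + 2 * d * y * z + 2 * e * x * z + 2 * f * x * y

/-- shifting so that the middle coefficient is small -/
lemma exists_shift (A B : ℤ) (hA : 0 < A) : ∃ t : ℤ, 2 * |B + A * t| ≤ A := by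
  have h1 := Int.emod_add_mul_ediv B A
  have h2 := Int.emod_nonneg B hA.ne'
  have h3 := Int.emod_lt_of_pos B hA
  by_cases h : 2 * (B % A) ≤ A
  · refine ⟨-(B / A), ?_⟩
    have : B + A * -(B / A) = B % A := by linarith
    rw [this, abs_of_nonneg h2]; exact h
  · refine ⟨-(B / A) - 1, ?_⟩
    have : B + A * (-(B / A) - 1) = -(A - B % A) := by linarith
    rw [this, abs_neg, abs_of_nonneg (by linarith)]; linarith

lemma binary_red (m : ℕ) : ∀ A B C D : ℤ, A.toNat = m → 0 < A → 0 < D → A * C - B ^ 2 = D →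
    ∃ p q r s : ℤ, p * s - q * r = 1 ∧ 0 < A * p ^ 2 + 2 * B * p * r + C * r ^ 2 ∧
      3 * (A * p ^ 2 + 2 * B * p * r + C * r ^ 2) ^ 2 ≤ 4 * D := by
  induction m using Nat.strong_induction_on with
  | _ m ih =>
    intro A B C D hm hA hD hdet
    obtain ⟨t, ht⟩ := exists_shift A B hA
    set B' := B + A * t with hB'
    set C' := A * t ^ 2 + 2 * B * t + C with hC'
    have hdet' : A * C' - B' ^ 2 = D := by rw [hC', hB', ← hdet]; ring
    have hC'pos : 0 < C' := by
      by_contra hcon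
      push Not at hcon
      nlinarith [sq_nonneg B', mul_nonneg hA.le (neg_nonneg.2 hcon)]
    by_cases hlt : C' < A
    · obtain ⟨p, q, r, s, h1, h2, h3⟩ := ih C'.toNat (by omega) C' (-B') A D rfl hC'pos hD
        (by rw [← hdet']; ring)
      -- vector p*(t,1) + r*(-1,0)
      have key : A * (p * t - r) ^ 2 + 2 * B * (p * t - r) * p + C * p ^ 2
          = C' * p ^ 2 + 2 * (-B') * p * r + A * r ^ 2 := by
        rw [hC', hB']; ring
      refine ⟨p * t - r, q * t - s, p, q, by linear_combination h1, ?_, ?_⟩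
      · rw [key]; exact h2
      · rw [key]; exact h3
    · push Not at hlt
      refine ⟨1, 0, 0, 1, by norm_num, by simpa using hA, ?_⟩
      have h4 : (2 * B') ^ 2 ≤ A ^ 2 := by
        rw [← sq_abs (2 * B'), abs_mul]
        have : |(2 : ℤ)| = 2 := rfl
        rw [this]
        exact pow_le_pow_left₀ (by positivity) ht 2
      have h5 : A * A ≤ A * C' := mul_le_mul_of_nonneg_left hlt hA.le
      nlinarith

lemma ternary_red (m : ℕ) : ∀ a b c d e f : ℤ, a.toNat = m → 0 < a → 0 < a * b - f ^ 2 →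
    a * b * c + 2 * d * e * f - a * d ^ 2 - b * e ^ 2 - c * f ^ 2 = 3 →
    (∀ x y z, TQ a b c d e f x y z % 9 ≠ 6) →
    ∀ x y z, ∃ X Y Z : ℤ, TQ a b c d e f x y z = X ^ 2 + Y ^ 2 + 3 * Z ^ 2 := by
  induction m using Nat.strong_induction_on with
  | _ m ih =>
    intro a b c d e f hm ha hA hdet H x y z
    obtain ⟨p, q, r, s, h1, h2, h3⟩ := binary_red _ (a * b - f ^ 2) (a * d - e * f) (a * c - e ^ 2)
      (3 * a) rfl hA (by linarith) (by linear_combination a * hdet)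
    -- new coefficients
    obtain ⟨b', hb'⟩ : ∃ b', b' = b * p ^ 2 + 2 * d * p * r + c * r ^ 2 := ⟨_, rfl⟩
    obtain ⟨c', hc'⟩ : ∃ c', c' = b * q ^ 2 + 2 * d * q * s + c * s ^ 2 := ⟨_, rfl⟩
    obtain ⟨d', hd'⟩ : ∃ d', d' = b * p * q + d * (p * s + q * r) + c * r * s := ⟨_, rfl⟩
    obtain ⟨f', hf'⟩ : ∃ f', f' = f * p + e * r := ⟨_, rfl⟩
    obtain ⟨e', he'⟩ : ∃ e', e' = f * q + e * s := ⟨_, rfl⟩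
    have hQ : ∀ u v w, TQ a b' c' d' e' f' u v w = TQ a b c d e f u (p * v + q * w) (r * v + s * w) := by
      intro u v w; simp only [TQ, hb', hc', hd', he', hf']; ring
    have hQ2 : TQ a b c d e f x y z = TQ a b' c' d' e' f' x (s * y - q * z) (p * z - r * y) := by
      rw [hQ]
      have e1 : p * (s * y - q * z) + q * (p * z - r * y) = y := by linear_combination y * h1
      have e2 : r * (s * y - q * z) + s * (p * z - r * y) = z := by linear_combination z * h1
      rw [e1, e2]
    have hdet' : a * b' * c' + 2 * d' * e' * f' - a * d' ^ 2 - b' * e' ^ 2 - c' * f' ^ 2 = 3 := by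
      have : a * b' * c' + 2 * d' * e' * f' - a * d' ^ 2 - b' * e' ^ 2 - c' * f' ^ 2 =
        (a * b * c + 2 * d * e * f - a * d ^ 2 - b * e ^ 2 - c * f ^ 2) * (p * s - q * r) ^ 2 := by
        simp only [hb', hc', hd', he', hf']; ring
      rw [this, hdet, h1]; norm_num
    have hA' : (a * b - f ^ 2) * p ^ 2 + 2 * (a * d - e * f) * p * r + (a * c - e ^ 2) * r ^ 2
        = a * b' - f' ^ 2 := by simp only [hb', hf']; ring
    rw [hA'] at h2 h3
    have H' : ∀ x y z, TQ a b' c' d' e' f' x y z % 9 ≠ 6 := by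
      intro x y z; rw [hQ]; exact H _ _ _
    rw [hQ2]
    generalize s * y - q * z = y'
    generalize p * z - r * y = z'
    clear hQ hQ2 hA' hb' hc' hd' hf' he' H hdet hA h1
    -- shift
    obtain ⟨t, ht⟩ := exists_shift a f' ha
    obtain ⟨g, hg⟩ : ∃ g, g = f' + a * t := ⟨_, rfl⟩
    obtain ⟨b2, hb2⟩ : ∃ b2, b2 = b' + 2 * f' * t + a * t ^ 2 := ⟨_, rfl⟩
    obtain ⟨d2, hd2⟩ : ∃ d2, d2 = d' + e' * t := ⟨_, rfl⟩
    rw [← hg] at ht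
    have hAA : a * b' - f' ^ 2 = a * b2 - g ^ 2 := by rw [hb2, hg]; ring
    have hg4 : (2 * g) ^ 2 ≤ a ^ 2 := by
      rw [← sq_abs (2 * g), abs_mul]
      have : |(2 : ℤ)| = 2 := rfl
      rw [this]
      exact pow_le_pow_left₀ (by positivity) ht 2
    have hb2pos : 0 < b2 := by
      rw [hAA] at h2
      by_contra hcon
      push Not at hcon
      nlinarith [sq_nonneg g, mul_nonneg ha.le (neg_nonneg.2 hcon)]
    have hQ : ∀ u v w, TQ b2 a c' e' d2 g u v w = TQ a b' c' d' e' f' (v + t * u) u w := by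
      intro u v w; simp only [TQ, hb2, hd2, hg]; ring
    by_cases hlt : b2 < a
    · have hx : TQ a b' c' d' e' f' x y' z' = TQ b2 a c' e' d2 g y' (x - t * y') z' := by
        rw [hQ]; congr 1; ring
      rw [hx]
      refine ih b2.toNat (by omega) b2 a c' e' d2 g rfl hb2pos (by linarith) ?_ ?_ _ _ _
      · rw [← hdet', hb2, hd2, hg]; ring
      · intro x y z; rw [hQ]; exact H' _ _ _
    · push Not at hlt
      have h5 : a * a ≤ a * b2 := mul_le_mul_of_nonneg_left hlt ha.le
      have h6 : 3 * a ^ 2 ≤ 4 * (a * b' - f' ^ 2) := by nlinarith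
      have ha1 : a = 1 := by
        by_contra hne
        have h2a : 2 ≤ a := by omega
        have h7 : (3 * a ^ 2) ^ 2 ≤ (4 * (a * b' - f' ^ 2)) ^ 2 :=
          pow_le_pow_left₀ (by positivity) h6 2
        have h8 : 9 * a ^ 4 ≤ 64 * a := by nlinarith
        have h9 : a * 8 ≤ a * a ^ 3 := by
          apply mul_le_mul_of_nonneg_left _ ha.le
          have := pow_le_pow_left₀ (by norm_num : (0:ℤ) ≤ 2) h2a 3
          linarith
        nlinarith
      subst ha1
      obtain ⟨A, hAdef⟩ : ∃ A, A = b' - f' ^ 2 := ⟨_, rfl⟩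
      obtain ⟨B, hBdef⟩ : ∃ B, B = d' - e' * f' := ⟨_, rfl⟩
      obtain ⟨C, hCdef⟩ : ∃ C, C = c' - e' ^ 2 := ⟨_, rfl⟩
      have hABC : A * C - B ^ 2 = 3 := by rw [hAdef, hBdef, hCdef]; linear_combination hdet'
      have hTQ : ∀ x y z, TQ 1 b' c' d' e' f' x y z =
          (x + f' * y + e' * z) ^ 2 + (A * y ^ 2 + 2 * B * y * z + C * z ^ 2) := by
        intro x y z; simp only [TQ, hAdef, hBdef, hCdef]; ring
      have hA0 : 0 < A := by rw [hAdef]; linarith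
      have hA2 : A ≤ 2 := by
        have : (1 * b' - f' ^ 2) = A := by rw [hAdef]; ring
        rw [this] at h3
        nlinarith
      have : A = 1 ∨ A = 2 := by omega
      rcases this with h | h
      · refine ⟨x + f' * y' + e' * z', y' + B * z', z', ?_⟩
        rw [hTQ]
        rw [h] at hABC ⊢
        linear_combination z' ^ 2 * hABC
      · exfalso
        rw [h] at hABC hTQ
        have hodd : B % 2 = 1 := by
          rcases Int.emod_two_eq_zero_or_one B with h0 | h0
          · exfalso
            obtain ⟨j, hj⟩ : ∃ j, B = 2 * j := ⟨B / 2, by omega⟩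
            rw [hj] at hABC
            ring_nf at hABC; omega
          · exact h0
        obtain ⟨j, hj⟩ : ∃ j, B = 2 * j + 1 := ⟨B / 2, by omega⟩
        have hC : C = 2 * j ^ 2 + 2 * j + 2 := by
          rw [hj] at hABC; nlinarith
        apply H' (-(f' * (1 - j) + e')) (1 - j) 1
        rw [hTQ, hC, hj]
        ring_nf
        norm_num

lemma exists_prime_k (n : ℕ) (hn : 0 < n) (hn3 : n % 3 = 1) :
    ∃ k t : ℕ, k.Prime ∧ 3 < k ∧ 3 * k + 1 = 4 * n * t := by
  have hco : Nat.Coprime 3 (4 * n) := by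
    rw [Nat.Prime.coprime_iff_not_dvd Nat.prime_three]; omega
  haveI : NeZero (4 * n) := ⟨by omega⟩
  let u : (ZMod (4 * n))ˣ := ZMod.unitOfCoprime 3 hco
  have hu : IsUnit ((-u⁻¹ : (ZMod (4 * n))ˣ) : ZMod (4 * n)) := Units.isUnit _
  obtain ⟨k, hk, hp, hmod⟩ := Nat.forall_exists_prime_gt_and_eq_mod hu 3
  have h : ((3 * k + 1 : ℕ) : ZMod (4 * n)) = 0 := by
    push_cast
    rw [hmod]
    have : (3 : ZMod (4 * n)) = (u : ZMod (4 * n)) := by simp [u]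
    rw [this, ← Units.val_mul]
    simp
  rw [ZMod.natCast_eq_zero_iff] at h
  obtain ⟨t, ht⟩ := h
  exact ⟨k, t, hp, hk, ht⟩

lemma jac (n k t : ℕ) (hn : 0 < n) (hn3 : n % 3 = 1) (hk : 3 * k + 1 = 4 * n * t) :
    jacobiSym n k = 1 := by
  have h3 : jacobiSym n 3 = 1 := by
    rw [jacobiSym.mod_left]
    have : ((n : ℤ) % (3 : ℕ)) = 1 := by omega
    rw [this, jacobiSym.one_left]
  have hk0 : k ≠ 0 := by rintro rfl; have := congrArg (· % 4) hk; simp [mul_assoc] at this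
  have hkodd : k % 2 = 1 := by
    have : 4 * n * t = 4 * (n * t) := by ring
    omega
  haveI : NeZero k := ⟨hk0⟩
  have hmul : jacobiSym n (3 * k) = jacobiSym n k := by
    rw [jacobiSym.mul_right, h3, one_mul]
  rw [← hmul]
  have ht : 0 < t := by
    rcases Nat.eq_zero_or_pos t with h | h
    · subst h; omega
    · exact h
  rw [jacobiSym.mod_right (n : ℤ) (Nat.odd_iff.2 (by omega))]
  have hm : 3 * k % (4 * (n : ℤ).natAbs) = 4 * n - 1 := by
    rw [Int.natAbs_natCast]
    obtain ⟨s, rfl⟩ : ∃ s, t = s + 1 := ⟨t - 1, by omega⟩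
    have : 3 * k = (4 * n - 1) + 4 * n * s := by rw [mul_add] at hk; omega
    rw [this, Nat.add_mul_mod_self_left, Nat.mod_eq_of_lt (by omega)]
  rw [hm]
  have h4 : jacobiSym (4 * n : ℤ) (4 * n - 1) = 1 := by
    rw [jacobiSym.mod_left]
    have : (4 * n : ℤ) % ((4 * n - 1 : ℕ) : ℤ) = 1 := by
      rw [Nat.cast_sub (by omega)]
      push_cast
      rw [Int.emod_eq_iff (by omega)]
      refine ⟨by norm_num, by omega, ?_⟩
      exact ⟨-1, by ring⟩
    rw [this, jacobiSym.one_left]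
  have h5 : jacobiSym (4 : ℤ) (4 * n - 1) = 1 := by
    have : (4 : ℤ) = 2 ^ 2 := by norm_num
    rw [this]
    apply jacobiSym.sq_one'
    rw [Int.gcd_eq_natAbs]
    have : Nat.Coprime 2 (4 * n - 1) := by
      rw [Nat.coprime_two_left, Nat.odd_iff]; omega
    simpa using this
  rw [jacobiSym.mul_left, h5, one_mul] at h4
  exact h4

lemma three_dvd_of_sq (x y : ℤ) (h : (x ^ 2 + y ^ 2) % 3 = 0) : x % 3 = 0 ∧ y % 3 = 0 := by
  have hx : x % 3 = 0 ∨ x % 3 = 1 ∨ x % 3 = 2 := by omega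
  have hy : y % 3 = 0 ∨ y % 3 = 1 ∨ y % 3 = 2 := by omega
  rcases hx with hx | hx | hx <;> rcases hy with hy | hy | hy <;>
    simp [pow_two, Int.add_emod, Int.mul_emod, hx, hy] at h ⊢

lemma main_rep (n : ℕ) (hn3 : n % 3 = 1) :
    ∃ w x y : ℤ, (n : ℤ) = w ^ 2 + 3 * x ^ 2 + 3 * y ^ 2 := by
  have hn : 0 < n := by omega
  obtain ⟨k, t, hp, hk3, hk⟩ := exists_prime_k n hn hn3
  have hJ := jac n k t hn hn3 hk
  haveI : Fact k.Prime := ⟨hp⟩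
  have hnt : 4 * n * t = 4 * (n * t) := by ring
  have hk4 : k % 4 = 1 := by omega
  have hkZ : (3 * k + 1 : ℤ) = 4 * n * t := by exact_mod_cast hk
  -- n is a square mod k and so is -1
  have hsq : IsSquare (-(4 * t : ℤ) : ZMod k) := by
    have hn2 : IsSquare ((n : ℤ) : ZMod k) := by
      rw [← jacobiSym.legendreSym.to_jacobiSym] at hJ
      exact ZMod.isSquare_of_jacobiSym_eq_one (by rw [← jacobiSym.legendreSym.to_jacobiSym]; exact hJ)
    have hm1 : IsSquare (-1 : ZMod k) := ZMod.exists_sq_eq_neg_one_iff.2 (by omega)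
    have hprod : ((n : ℤ) : ZMod k) * (4 * t : ℤ) = 1 := by
      have := congrArg (fun z : ℤ => (z : ZMod k)) hkZ
      push_cast at this ⊢
      simp at this
      rw [this]; ring
    obtain ⟨α, hα⟩ := hn2
    obtain ⟨ι, hι⟩ := hm1
    rw [hα] at hprod
    refine ⟨ι * (α * (4 * t : ℤ)), ?_⟩
    push_cast at hprod ⊢
    linear_combination (4 * (t : ZMod k)) * (-1 : ZMod k) * 0 + (4 * (t : ZMod k)) ^ 2 * α ^ 2 * hι + (4 * (t : ZMod k)) * hprod
  obtain ⟨ε, hε⟩ := hsq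
  obtain ⟨e, rfl⟩ := ZMod.intCast_surjective ε
  have hdvd : (k : ℤ) ∣ 4 * t + e ^ 2 := by
    rw [← ZMod.intCast_zmod_eq_zero_iff_dvd]
    push_cast at hε ⊢
    linear_combination -hε
  obtain ⟨a, ha⟩ := hdvd
  have htpos : 0 < t := by
    rcases Nat.eq_zero_or_pos t with h | h
    · subst h; omega
    · exact h
  have hkpos : (0 : ℤ) < k := by omega
  have hapos : 0 < a := by
    have : 0 < (k : ℤ) * a := by rw [← ha]; positivity
    exact (mul_pos_iff_of_pos_left hkpos).1 this
  have hb3 : (4 * t : ℤ) % 3 = 1 := by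
    have h1 : (n * t) % 3 = t % 3 := by rw [Nat.mul_mod, hn3]; simp
    omega
  have hk3' : (k : ℤ) % 3 ≠ 0 := by
    intro h
    have : 3 ∣ k := by omega
    rcases (Nat.dvd_prime hp).1 this with h | h <;> omega
  have H : ∀ x y z, TQ a k (3 * n) 0 3 e x y z % 9 ≠ 6 := by
    intro x y z h6
    have hq : (k : ℤ) * TQ a k (3 * n) 0 3 e x y z =
        (k * y + e * x) ^ 2 + x ^ 2 + 3 * (((4 * t - 1) / 3) * x ^ 2 + 2 * k * x * z + n * k * z ^ 2) := by
      have h43 : 3 * ((4 * (t : ℤ) - 1) / 3) = 4 * t - 1 := by omega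
      simp only [TQ]
      linear_combination (-x ^ 2) * ha - x ^ 2 * h43
    have h0 : (((k * y + e * x) ^ 2 + x ^ 2 : ℤ)) % 3 = 0 := by
      obtain ⟨j, hj⟩ : ∃ j, TQ a k (3 * n) 0 3 e x y z = 3 * j :=
        ⟨TQ a k (3 * n) 0 3 e x y z / 3, by omega⟩
      rw [hj] at hq
      have : ((k * y + e * x) ^ 2 + x ^ 2 : ℤ) = 3 * (k * j - (((4 * t - 1) / 3) * x ^ 2 + 2 * k * x * z + n * k * z ^ 2)) := by
        linarith
      rw [this]; simp
    obtain ⟨g1, g2⟩ := three_dvd_of_sq _ _ h0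
    have hx : (3 : ℤ) ∣ x := by omega
    have hy : (3 : ℤ) ∣ y := by
      have h7 : (3 : ℤ) ∣ k * y := by
        have : (3 : ℤ) ∣ (k * y + e * x) := Int.dvd_of_emod_eq_zero g1
        exact (Int.dvd_add_left (Dvd.dvd.mul_left hx e)).1 this
      rcases Int.prime_three.dvd_or_dvd h7 with h | h
      · omega
      · exact h
    obtain ⟨x', rfl⟩ := hx
    obtain ⟨y', rfl⟩ := hy
    obtain ⟨n', hn'⟩ : ∃ n' : ℤ, (n : ℤ) = 3 * n' + 1 := ⟨n / 3, by omega⟩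
    have h8 : TQ a k (3 * n) 0 3 e (3 * x') (3 * y') z =
        3 * z ^ 2 + 9 * (a * x' ^ 2 + k * y' ^ 2 + n' * z ^ 2 + 2 * x' * z + 2 * e * x' * y') := by
      simp only [TQ, hn']; ring
    rw [h8] at h6
    have hz : z % 3 = 0 ∨ z % 3 = 1 ∨ z % 3 = 2 := by omega
    have hz2 : z ^ 2 % 3 = 0 ∨ z ^ 2 % 3 = 1 := by
      rcases hz with hz | hz | hz <;> simp [pow_two, Int.mul_emod, hz]
    omega
  obtain ⟨X, Y, Z, hXYZ⟩ := ternary_red _ a k (3 * n) 0 3 e rfl hapos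
    (by have : a * k - e ^ 2 = 4 * (t : ℤ) := by linarith
        rw [this]; positivity)
    (by linear_combination (-3 * (n : ℤ)) * ha - 3 * hkZ) H 0 0 1
  have hval : TQ a k (3 * n) 0 3 e 0 0 1 = 3 * n := by simp [TQ]
  rw [hval] at hXYZ
  obtain ⟨gX, gY⟩ := three_dvd_of_sq X Y (by omega)
  obtain ⟨X', rfl⟩ : (3 : ℤ) ∣ X := by omega
  obtain ⟨Y', rfl⟩ : (3 : ℤ) ∣ Y := by omega
  exact ⟨Z, X', Y', by linarith⟩

lemma even_step (w x y M : ℤ) (hw : w % 2 = 1) (hx : x % 2 = 1) (hy : y % 2 = 0)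
    (h : w ^ 2 + 3 * x ^ 2 + 3 * y ^ 2 = 2 * M) :
    ∃ v p q : ℤ, 2 * v ^ 2 + 3 * p ^ 2 + 3 * q ^ 2 = M := by
  obtain ⟨y', rfl⟩ : (2 : ℤ) ∣ y := by omega
  have key : ∀ x : ℤ, (w - x) % 4 = 0 → w ^ 2 + 3 * x ^ 2 + 3 * (2 * y') ^ 2 = 2 * M →
      ∃ v p q : ℤ, 2 * v ^ 2 + 3 * p ^ 2 + 3 * q ^ 2 = M := by
    intro x hd h
    obtain ⟨j, hj⟩ : ∃ j, w = x + 4 * j := ⟨(w - x) / 4, by omega⟩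
    subst hj
    refine ⟨x + j, j + y', j - y', ?_⟩
    linarith
  by_cases hd : (w - x) % 4 = 0
  · exact key x hd h
  · exact key (-x) (by omega) (by rw [neg_sq]; exact h)

lemma rep_two (M : ℤ) (hM : 0 ≤ M) (hM3 : M % 3 = 2) :
    ∃ v p q : ℤ, 2 * v ^ 2 + 3 * p ^ 2 + 3 * q ^ 2 = M := by
  obtain ⟨w, x, y, h⟩ := main_rep (2 * M).toNat (by omega)
  rw [Int.toNat_of_nonneg (by omega)] at h
  have par : ∀ s : ℤ, s ^ 2 % 4 = s % 2 := by
    intro s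
    rcases Int.emod_two_eq_zero_or_one s with h0 | h0
    · obtain ⟨j, rfl⟩ : (2 : ℤ) ∣ s := by omega
      ring_nf; omega
    · obtain ⟨j, rfl⟩ : ∃ j, s = 2 * j + 1 := ⟨s / 2, by omega⟩
      ring_nf; omega
  have pw := par w
  have px := par x
  have py := par y
  rcases Int.emod_two_eq_zero_or_one w with hw | hw
  · obtain ⟨v, rfl⟩ : (2 : ℤ) ∣ w := by omega
    obtain ⟨p, hp⟩ : ∃ p, x = y + 2 * p := ⟨(x - y) / 2, by omega⟩
    subst hp
    exact ⟨v, y + p, p, by linarith⟩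
  · rcases Int.emod_two_eq_zero_or_one x with hx | hx
    · exact even_step w y x M hw (by omega) hx (by linarith)
    · exact even_step w x y M hw hx (by omega) h.symm

lemma sq_mod3 (w : ℤ) (hw : w % 3 ≠ 0) : ∃ z, (3 * z - 1) ^ 2 = w ^ 2 := by
  have : w % 3 = 1 ∨ w % 3 = 2 := by omega
  rcases this with h | h
  · exact ⟨(1 - w) / 3, by
      have : 3 * ((1 - w) / 3) - 1 = -w := by omega
      rw [this]; ring⟩
  · exact ⟨(w + 1) / 3, by
      have : 3 * ((w + 1) / 3) - 1 = w := by omega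
      rw [this]⟩

theorem universal_x2_y2_betaP8 :
    ∀ β ∈ ({1, 2} : Set ℤ), ∀ N : ℤ, 0 ≤ N →
      ∃ x y z : ℤ, x ^ 2 + y ^ 2 + β * (3 * z ^ 2 - 2 * z) = N := by
  intro β hβ N hN
  simp only [Set.mem_insert_iff, Set.mem_singleton_iff] at hβ
  rcases hβ with rfl | rfl
  · obtain ⟨w, x, y, h⟩ := main_rep (3 * N + 1).toNat (by omega)
    rw [Int.toNat_of_nonneg (by omega)] at h
    have hw : w % 3 ≠ 0 := by
      intro h0
      obtain ⟨j, rfl⟩ : (3 : ℤ) ∣ w := by omega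
      ring_nf at h; omega
    obtain ⟨z, hz⟩ := sq_mod3 w hw
    exact ⟨x, y, z, by linarith⟩
  · obtain ⟨w, x, y, h⟩ := rep_two (3 * N + 2) (by omega) (by omega)
    have hw : w % 3 ≠ 0 := by
      intro h0
      obtain ⟨j, rfl⟩ : (3 : ℤ) ∣ w := by omega
      ring_nf at h; omega
    obtain ⟨z, hz⟩ := sq_mod3 w hw
    exact ⟨x, y, z, by linarith⟩
end

section
/- For every nonnegative integer N, the equation x² + 3y² + (3z² − 2z) = N has an integer solution (x, y, z) ∈ ℤ³. That is, the ternary mixed sum x²+3y²+P₈(z) of generalized 4- and 8-gonal numbers is universal. -/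
def TernGood (n a b c d e f : ℤ) : Prop :=
  0 < a ∧ 0 < 4 * a * b - f ^ 2 ∧
  4 * a * b * c + d * e * f - a * d ^ 2 - b * e ^ 2 - c * f ^ 2 = 3 ∧
  ∃ x y z : ℤ, a * x ^ 2 + b * y ^ 2 + c * z ^ 2 + d * y * z + e * x * z + f * x * y = n

theorem tern_round (a f : ℤ) (ha : 0 < a) : ∃ k : ℤ, -a ≤ f + 2 * a * k ∧ f + 2 * a * k ≤ a := by
  refine ⟨-((f + a) / (2 * a)), ?_⟩
  have h1 := Int.emod_add_mul_ediv (f + a) (2 * a)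
  have h2 := Int.emod_nonneg (f + a) (show 2 * a ≠ 0 by omega)
  have h3 := Int.emod_lt_of_pos (f + a) (show 0 < 2 * a by omega)
  constructor <;> nlinarith

theorem tern_shiftX {n a b c d e f : ℤ} (h : TernGood n a b c d e f) (k l : ℤ) :
    TernGood n a (b + f * k + a * k ^ 2) (c + e * l + a * l ^ 2)
      (d + 2 * a * k * l + e * k + f * l) (e + 2 * a * l) (f + 2 * a * k) := by
  obtain ⟨h1, h2, h3, x, y, z, h4⟩ := h
  refine ⟨h1, ?_, ?_, x - k * y - l * z, y, z, ?_⟩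
  · linarith [h2]
  · linear_combination h3
  · linear_combination h4

theorem tern_shiftY {n a b c d e f : ℤ} (h : TernGood n a b c d e f) (m : ℤ) :
    TernGood n a b (c + d * m + b * m ^ 2) (d + 2 * b * m) (e + f * m) f := by
  obtain ⟨h1, h2, h3, x, y, z, h4⟩ := h
  refine ⟨h1, h2, ?_, x, y - m * z, z, ?_⟩
  · linear_combination h3
  · linear_combination h4

theorem tern_unit (t : ℤ) (h : t ^ 2 = 1) : t = 1 ∨ t = -1 := by
  have : t * t = 1 := by linarith [sq t]
  exact mul_self_eq_one_iff.1 this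

theorem tern_key (b c d e f P T R : ℤ) (hP : P = 4 * 1 * b - f ^ 2)
    (hT : T = 4 * 1 * c - e ^ 2) (hRd : R = 2 * 1 * d - e * f)
    (hdet : P * T - R ^ 2 = 12 * 1)
    (hf : f = -1 ∨ f = 0 ∨ f = 1) (he : e = -1 ∨ e = 0 ∨ e = 1)
    (hR : R = -2 ∨ R = -1 ∨ R = 0 ∨ R = 1 ∨ R = 2) (hPP : P = 3 ∨ P = 4) :
    b = 1 ∧ c = 1 ∧ ((d = 0 ∧ e = 0) ∨ (d = 0 ∧ f = 0) ∨ (e = 0 ∧ f = 0)) := by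
  rcases hPP with rfl | rfl <;> rcases hf with rfl | rfl | rfl <;> (try omega) <;>
    rcases hR with rfl | rfl | rfl | rfl | rfl <;> (try omega) <;>
    rcases he with rfl | rfl | rfl <;> omega

theorem tern_final {n a b c d e f : ℤ} (h : TernGood n a b c d e f)
    (hf1 : -a ≤ f) (hf2 : f ≤ a) (he1 : -a ≤ e) (he2 : e ≤ a)
    (hR1 : -(4 * a * b - f ^ 2) ≤ 2 * (2 * a * d - e * f))
    (hR2 : 2 * (2 * a * d - e * f) ≤ 4 * a * b - f ^ 2)
    (hb : a ≤ b) (hT : 4 * a * b - f ^ 2 ≤ 4 * a * c - e ^ 2) :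
    ∃ u v w t : ℤ, (t = 1 ∨ t = -1) ∧ u ^ 2 + v ^ 2 + t * v * w + w ^ 2 = n := by
  obtain ⟨h1, h2, h3, x, y, z, h4⟩ := h
  obtain ⟨P, hP⟩ : ∃ P, P = 4 * a * b - f ^ 2 := ⟨_, rfl⟩
  obtain ⟨T, hTd⟩ : ∃ T, T = 4 * a * c - e ^ 2 := ⟨_, rfl⟩
  obtain ⟨R, hRd⟩ : ∃ R, R = 2 * a * d - e * f := ⟨_, rfl⟩
  have hdet : P * T - R ^ 2 = 12 * a := by
    rw [hP, hTd, hRd]; linear_combination 4 * a * h3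
  rw [← hP, ← hRd] at hR1 hR2
  rw [← hP] at h2 hT
  rw [← hTd] at hT
  have hP16 : P ^ 2 ≤ 16 * a := by nlinarith
  have hPa : 3 * a ^ 2 ≤ P := by nlinarith
  have ha1 : a = 1 := by
    by_contra hne
    have : 2 ≤ a := by omega
    have h5 : 6 * a ≤ P := by nlinarith
    nlinarith
  subst ha1
  have hP4 : P ≤ 4 := by nlinarith
  have hP3 : 3 ≤ P := by linarith
  have hf : f = -1 ∨ f = 0 ∨ f = 1 := by omega
  have he : e = -1 ∨ e = 0 ∨ e = 1 := by omega
  have hR : R = -2 ∨ R = -1 ∨ R = 0 ∨ R = 1 ∨ R = 2 := by omega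
  have hPP : P = 3 ∨ P = 4 := by omega
  obtain ⟨rfl, rfl, hc⟩ := tern_key b c d e f P T R hP hTd hRd hdet hf he hR hPP
  rcases hc with ⟨rfl, rfl⟩ | ⟨rfl, rfl⟩ | ⟨rfl, rfl⟩
  · exact ⟨z, x, y, f, tern_unit f (by linarith), by linear_combination h4⟩
  · exact ⟨y, x, z, e, tern_unit e (by linarith), by linear_combination h4⟩
  · exact ⟨x, y, z, d, tern_unit d (by linarith), by linear_combination h4⟩

theorem tern_reduce (A : ℕ) : ∀ (Q : ℕ) (n a b c d e f : ℤ), a = A → 4 * a * b - f ^ 2 = Q →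
    TernGood n a b c d e f →
    ∃ u v w t : ℤ, (t = 1 ∨ t = -1) ∧ u ^ 2 + v ^ 2 + t * v * w + w ^ 2 = n := by
  induction A using Nat.strong_induction_on with
  | _ A ihA =>
  intro Q
  induction Q using Nat.strong_induction_on with
  | _ Q ihQ =>
  intro n a b c d e f hA hQ h
  obtain ⟨m, hm1, hm2⟩ := tern_round (4 * a * b - f ^ 2) (2 * (2 * a * d - e * f)) h.2.1
  have hh := tern_shiftY h m
  have e1 : 2 * (2 * a * d - e * f) + 2 * (4 * a * b - f ^ 2) * m
      = 2 * (2 * a * (d + 2 * b * m) - (e + f * m) * f) := by ring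
  rw [e1] at hm1 hm2
  clear h e1
  generalize c + d * m + b * m ^ 2 = c' at *
  generalize d + 2 * b * m = d' at *
  generalize e + f * m = e' at *
  clear c d e m
  obtain ⟨k, hk1, hk2⟩ := tern_round a f hh.1
  obtain ⟨l, hl1, hl2⟩ := tern_round a e' hh.1
  have h := tern_shiftX hh k l
  have e1 : 4 * a * b - f ^ 2
      = 4 * a * (b + f * k + a * k ^ 2) - (f + 2 * a * k) ^ 2 := by ring
  have e2 : 2 * a * d' - e' * f = 2 * a * (d' + 2 * a * k * l + e' * k + f * l)
     - (e' + 2 * a * l) * (f + 2 * a * k) := by ring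
  rw [e1] at hQ
  rw [e1, e2] at hm1 hm2
  clear hh e1 e2
  generalize b + f * k + a * k ^ 2 = b at *
  generalize c' + e' * l + a * l ^ 2 = c at *
  generalize d' + 2 * a * k * l + e' * k + f * l = d at *
  generalize e' + 2 * a * l = e at *
  generalize f + 2 * a * k = f at *
  obtain ⟨h1, h2, h3, x, y, z, h4⟩ := id h
  have hb0 : 0 < b := by nlinarith [sq_nonneg f]
  have hdet : (4 * a * b - f ^ 2) * (4 * a * c - e ^ 2) - (2 * a * d - e * f) ^ 2 = 12 * a := by
    linear_combination 4 * a * h3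
  have hT0 : 0 < 4 * a * c - e ^ 2 := by
    have : 0 < (4 * a * b - f ^ 2) * (4 * a * c - e ^ 2) := by
      nlinarith [sq_nonneg (2 * a * d - e * f)]
    exact (pos_iff_pos_of_mul_pos this).1 h2
  by_cases hb : a ≤ b
  · by_cases hT : 4 * a * b - f ^ 2 ≤ 4 * a * c - e ^ 2
    · exact tern_final h hk1 hk2 hl1 hl2 hm1 hm2 hb hT
    · refine ihQ (4 * a * c - e ^ 2).toNat (by omega) n a c b d f e hA (by omega)
        ⟨h1, hT0, by linear_combination h3, x, z, y, by linear_combination h4⟩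
  · refine ihA b.toNat (by omega) (4 * b * a - f ^ 2).toNat n b a c e d f (by omega) ?_
        ⟨hb0, by linarith, by linear_combination h3, y, x, z, by linear_combination h4⟩
    rw [Int.toNat_of_nonneg]
    linarith

theorem hex_to_three (v w t : ℤ) (ht : t = 1 ∨ t = -1) :
    ∃ q r : ℤ, q ^ 2 + 3 * r ^ 2 = v ^ 2 + t * v * w + w ^ 2 := by
  have main : ∀ v w : ℤ, ∃ q r : ℤ, q ^ 2 + 3 * r ^ 2 = v ^ 2 + v * w + w ^ 2 := by
    intro v w
    rcases Int.even_or_odd' v with ⟨i, rfl | rfl⟩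
    · exact ⟨w + i, i, by ring⟩
    · rcases Int.even_or_odd' w with ⟨j, rfl | rfl⟩
      · exact ⟨2 * i + 1 + j, j, by ring⟩
      · exact ⟨i - j, i + j + 1, by ring⟩
  rcases ht with rfl | rfl
  · obtain ⟨q, r, h⟩ := main v w
    exact ⟨q, r, by linear_combination h⟩
  · obtain ⟨q, r, h⟩ := main v (-w)
    exact ⟨q, r, by linear_combination h⟩

theorem tern_exists (M : ℕ) : ∃ a b c d e f : ℤ, TernGood (3 * M + 1) a b c d e f := by
  obtain ⟨n, hn⟩ : ∃ n, n = 3 * M + 1 := ⟨_, rfl⟩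
  have hcop : Nat.Coprime (4 * n - 3) (48 * n) := by
    have hA : Nat.Coprime (4 * n - 3) 2 := by
      rw [Nat.coprime_two_right, Nat.odd_iff]; omega
    have hB : Nat.Coprime (4 * n - 3) 3 := by
      rw [Nat.coprime_comm, Nat.Prime.coprime_iff_not_dvd Nat.prime_three]; omega
    have hC : Nat.Coprime (4 * n - 3) n := by
      rw [Nat.coprime_iff_gcd_eq_one]
      have h1 := Nat.gcd_dvd_left (4 * n - 3) n
      have h2 := Nat.gcd_dvd_right (4 * n - 3) n
      have h3 : (4 * n - 3).gcd n ∣ 3 := by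
        have h4 : (4 * n - 3).gcd n ∣ 4 * n - 3 + 3 := by
          rw [Nat.sub_add_cancel (by omega)]; exact h2.mul_left 4
        exact (Nat.dvd_add_right h1).1 h4
      rcases (Nat.dvd_prime Nat.prime_three).1 h3 with h | h
      · exact h
      · rw [h] at h2; omega
    have : 48 * n = 2 ^ 4 * 3 * n := by ring
    rw [this]
    exact ((hA.pow_right 4).mul_right hB).mul_right hC
  obtain ⟨p, hgt, hp, hmod⟩ :=
    Nat.forall_exists_prime_gt_and_modEq (4 * n) (by omega : 48 * n ≠ 0) hcop
  obtain ⟨k, hk⟩ : ∃ k, p = 4 * n - 3 + 48 * n * k := by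
    obtain ⟨k, hk⟩ := (Nat.modEq_iff_dvd' (by omega)).1 hmod.symm
    exact ⟨k, by omega⟩
  obtain ⟨E, hE⟩ : ∃ E, E = 12 * k + 1 := ⟨_, rfl⟩
  have hpE : p + 3 = 4 * n * E := by
    rw [hE, hk, show 4 * n * (12 * k + 1) = 48 * n * k + 4 * n by ring]; omega
  have hpZ : (p : ℤ) = 4 * n * E - 3 := by
    have : ((p + 3 : ℕ) : ℤ) = ((4 * n * E : ℕ) : ℤ) := by rw [hpE]
    push_cast at this; linarith
  have hp4 : p % 4 = 1 := by
    have : 4 * n * E = 4 * (n * E) := by ring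
    omega
  have hE4 : E % 4 = 1 := by omega
  have hpo : Odd p := by rw [Nat.odd_iff]; omega
  have hEo : Odd E := by rw [Nat.odd_iff]; omega
  haveI : Fact p.Prime := ⟨hp⟩
  have neg1 : ∀ m : ℕ, m % 4 = 1 → jacobiSym (-1) m = 1 := by
    intro m hm
    rw [jacobiSym.at_neg_one (by rw [Nat.odd_iff]; omega), ZMod.χ₄_nat_one_mod_four hm]
  have hJ : jacobiSym (-(E : ℤ)) p = 1 := by
    rw [← neg_one_mul, jacobiSym.mul_left, neg1 p hp4, one_mul,
      jacobiSym.quadratic_reciprocity_one_mod_four hE4 hpo]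
    have : jacobiSym (p : ℤ) E = jacobiSym (-1 * (3 : ℕ)) E := by
      apply jacobiSym.mod_left'
      apply Int.ModEq.symm
      rw [Int.modEq_iff_dvd]
      exact ⟨4 * n, by rw [hpZ]; push_cast; ring⟩
    rw [this, jacobiSym.mul_left, neg1 E hE4, one_mul,
      ← jacobiSym.quadratic_reciprocity_one_mod_four hE4 (by decide)]
    rw [jacobiSym.mod_left, show ((E : ℤ) % (3 : ℕ)) = 1 by push_cast; omega, jacobiSym.one_left]
  obtain ⟨s, hs⟩ := ZMod.isSquare_of_jacobiSym_eq_one hJ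
  obtain ⟨B, rfl⟩ := ZMod.intCast_surjective s
  have hdvd : (p : ℤ) ∣ E + B ^ 2 := by
    rw [← ZMod.intCast_zmod_eq_zero_iff_dvd]
    push_cast at hs ⊢
    rw [sq, ← hs]; ring
  obtain ⟨A, hA⟩ := hdvd
  have hp0 : (0 : ℤ) < p := by exact_mod_cast hp.pos
  have hE0 : (0 : ℤ) < E := by omega
  have hA0 : 0 < A := by
    have : 0 < (p : ℤ) * A := by rw [← hA]; positivity
    exact (pos_iff_pos_of_mul_pos this).1 hp0
  refine ⟨A, p, n, 0, 1, 2 * B, hA0, by nlinarith, ?_, 0, 0, 1, by rw [hn]; push_cast; ring⟩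
  linear_combination (-4 * (n : ℤ)) * hA - hpZ

theorem universal_x2_3y2_P8 :
    ∀ N : ℤ, 0 ≤ N →
      ∃ x y z : ℤ, x ^ 2 + 3 * y ^ 2 + (3 * z ^ 2 - 2 * z) = N := by
  intro N hN
  obtain ⟨a, b, c, d, e, f, h⟩ := tern_exists N.toNat
  rw [Int.toNat_of_nonneg hN] at h
  obtain ⟨u, v, w, t, ht, h1⟩ := tern_reduce a.toNat (4 * a * b - f ^ 2).toNat _ a b c d e f
    (Int.toNat_of_nonneg h.1.le).symm (Int.toNat_of_nonneg h.2.1.le).symm h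
  obtain ⟨q, r, h2⟩ := hex_to_three v w t ht
  have h3 : u ^ 2 + q ^ 2 + 3 * r ^ 2 = 3 * N + 1 := by linear_combination h1 + h2
  clear h1 h2 h
  have fin : ∀ i w : ℤ, ¬ (3 ∣ w) → (3 * i) ^ 2 + w ^ 2 + 3 * r ^ 2 = 3 * N + 1 →
      ∃ x y z : ℤ, x ^ 2 + 3 * y ^ 2 + (3 * z ^ 2 - 2 * z) = N := by
    intro i w hw h
    have : w % 3 = 1 ∨ w % 3 = 2 := by omega
    rcases this with hh | hh
    · obtain ⟨j, rfl⟩ : ∃ j, w = 1 - 3 * j := ⟨(1 - w) / 3, by omega⟩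
      exact ⟨r, i, j, by linarith⟩
    · obtain ⟨j, rfl⟩ : ∃ j, w = 3 * j - 1 := ⟨(w + 1) / 3, by omega⟩
      exact ⟨r, i, j, by linarith⟩
  have sq3 : ∀ w : ℤ, ¬ (3 ∣ w) → ∃ j, w ^ 2 = 3 * j + 1 := by
    intro w hw
    have : w % 3 = 1 ∨ w % 3 = 2 := by omega
    rcases this with hh | hh
    · obtain ⟨j, rfl⟩ : ∃ j, w = 3 * j + 1 := ⟨w / 3, by omega⟩
      exact ⟨3 * j ^ 2 + 2 * j, by ring⟩
    · obtain ⟨j, rfl⟩ : ∃ j, w = 3 * j + 2 := ⟨w / 3, by omega⟩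
      exact ⟨3 * j ^ 2 + 4 * j + 1, by ring⟩
  by_cases hu : 3 ∣ u
  · obtain ⟨i, rfl⟩ := hu
    refine fin i q ?_ h3
    rintro ⟨j, rfl⟩
    have h5 : 3 * (3 * i ^ 2 + 3 * j ^ 2 + r ^ 2 - N) = 1 := by linarith
    omega
  · by_cases hq : 3 ∣ q
    · obtain ⟨i, rfl⟩ := hq
      exact fin i u hu (by linarith)
    · obtain ⟨j1, hj1⟩ := sq3 u hu
      obtain ⟨j2, hj2⟩ := sq3 q hq
      omega
end

section
/- For every nonnegative integer N, the equation 2x² + 3y² + (3z² − 2z) = N has an integer solution (x, y, z) ∈ ℤ³. That is, the ternary mixed sum 2x²+3y²+P₈(z) of generalized 4- and 8-gonal numbers is universal. -/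
def Rep6 (n : ℤ) : Prop := ∃ u v w : ℤ, n = u ^ 2 + v ^ 2 + 6 * w ^ 2

structure Good (a b c r s t : ℤ) : Prop where
  ha : 0 < a
  hA : 0 < a * b - t ^ 2
  hdet : a * b * c + 2 * r * s * t - a * r ^ 2 - b * s ^ 2 - c * t ^ 2 = 6
  hodd : ¬ (2 ∣ a ∧ 2 ∣ b ∧ 2 ∣ c)
  hmod : ∃ l₁ l₂ l₃ m₁ m₂ m₃ q₁ q₂ q₃ q₄ q₅ q₆ : ℤ,
    a = l₁ ^ 2 + m₁ ^ 2 + 3 * q₁ ∧ b = l₂ ^ 2 + m₂ ^ 2 + 3 * q₂ ∧ c = l₃ ^ 2 + m₃ ^ 2 + 3 * q₃ ∧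
    r = l₂ * l₃ + m₂ * m₃ + 3 * q₄ ∧ s = l₁ * l₃ + m₁ * m₃ + 3 * q₅ ∧
    t = l₁ * l₂ + m₁ * m₂ + 3 * q₆

def AllRep (a b c r s t : ℤ) : Prop := ∀ x y z : ℤ,
  Rep6 (a * x ^ 2 + b * y ^ 2 + c * z ^ 2 + 2 * r * y * z + 2 * s * x * z + 2 * t * x * y)

/-- e2 := e2 + k e1 -/
theorem good_shift21 {a b c r s t : ℤ} (k : ℤ) (h : Good a b c r s t) :
    Good a (b + 2 * k * t + k ^ 2 * a) c (r + k * s) s (t + k * a) := by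
  obtain ⟨ha, hA, hd, ho, l₁, l₂, l₃, m₁, m₂, m₃, q₁, q₂, q₃, q₄, q₅, q₆, h1, h2, h3, h4, h5, h6⟩ := h
  refine ⟨ha, by linarith, by linear_combination hd, ?_, l₁, l₂ + k * l₁, l₃, m₁, m₂ + k * m₁, m₃,
    q₁, q₂ + 2 * k * q₆ + k ^ 2 * q₁, q₃, q₄ + k * q₅, q₅, q₆ + k * q₁, h1, ?_, h3, ?_, h5, ?_⟩
  · rintro ⟨h, h', h''⟩
    refine ho ⟨h, ?_, h''⟩
    have e : b = (b + 2 * k * t + k ^ 2 * a) - 2 * (k * t) - k ^ 2 * a := by ring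
    rw [e]
    exact dvd_sub (dvd_sub h' (Dvd.intro _ rfl)) (h.mul_left _)
  · linear_combination h2 + 2 * k * h6 + k ^ 2 * h1
  · linear_combination h4 + k * h5
  · linear_combination h6 + k * h1

theorem allRep_shift21 {a b c r s t : ℤ} (k : ℤ)
    (h : AllRep a (b + 2 * k * t + k ^ 2 * a) c (r + k * s) s (t + k * a)) :
    AllRep a b c r s t := by
  intro x y z
  have := h (x - k * y) y z
  ring_nf at this ⊢
  exact this

theorem good_swap12 {a b c r s t : ℤ} (h : Good a b c r s t) : Good b a c s r t := by
  obtain ⟨ha, hA, hd, ho, l₁, l₂, l₃, m₁, m₂, m₃, q₁, q₂, q₃, q₄, q₅, q₆, h1, h2, h3, h4, h5, h6⟩ := h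
  refine ⟨?_, by linarith, by linear_combination hd, by tauto, l₂, l₁, l₃, m₂, m₁, m₃,
    q₂, q₁, q₃, q₅, q₄, q₆, h2, h1, h3, h5, h4, by linear_combination h6⟩
  by_contra hb
  push Not at hb
  nlinarith [mul_nonneg ha.le (neg_nonneg.mpr hb), sq_nonneg t]

theorem allRep_swap12 {a b c r s t : ℤ} (h : AllRep b a c s r t) : AllRep a b c r s t := by
  intro x y z
  have := h y x z
  ring_nf at this ⊢
  exact this

theorem good_swap23 {a b c r s t : ℤ} (h : Good a b c r s t) : Good a c b r t s := by
  obtain ⟨ha, hA, hd, ho, l₁, l₂, l₃, m₁, m₂, m₃, q₁, q₂, q₃, q₄, q₅, q₆, h1, h2, h3, h4, h5, h6⟩ := h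
  refine ⟨ha, ?_, by linear_combination hd, by tauto, l₁, l₃, l₂, m₁, m₃, m₂,
    q₁, q₃, q₂, q₄, q₆, q₅, h1, h3, h2, by linear_combination h4, h6, h5⟩
  have e : (a * b - t ^ 2) * (a * c - s ^ 2) = 6 * a + (a * r - s * t) ^ 2 := by
    linear_combination a * hd
  refine pos_of_mul_pos_right (a := a * b - t ^ 2) ?_ hA.le
  rw [e]; positivity

theorem allRep_swap23 {a b c r s t : ℤ} (h : AllRep a c b r t s) : AllRep a b c r s t := by
  intro x y z
  have := h x z y
  ring_nf at this ⊢
  exact this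

theorem exists_shift_s6 (t a : ℤ) (ha : 0 < a) : ∃ k : ℤ, -a ≤ 2 * (t + k * a) ∧ 2 * (t + k * a) ≤ a := by
  refine ⟨-((2 * t + a) / (2 * a)), ?_⟩
  have h1 := Int.emod_add_mul_ediv (2 * t + a) (2 * a)
  have h2 := Int.emod_nonneg (2 * t + a) (by omega : 2 * a ≠ 0)
  have h3 := Int.emod_lt_of_pos (2 * t + a) (by omega : 0 < 2 * a)
  constructor <;> nlinarith

theorem no_mod3 (l₁ l₂ m₁ m₂ q₁ q₂ q₆ : ℤ) (h1 : 1 = l₁ ^ 2 + m₁ ^ 2 + 3 * q₁)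
    (h2 : 2 = l₂ ^ 2 + m₂ ^ 2 + 3 * q₂) (h6 : 0 = l₁ * l₂ + m₁ * m₂ + 3 * q₆) : False := by
  have h1' := congrArg (Int.cast : ℤ → ZMod 3) h1
  have h2' := congrArg (Int.cast : ℤ → ZMod 3) h2
  have h6' := congrArg (Int.cast : ℤ → ZMod 3) h6
  push_cast at h1' h2' h6'
  have h3 : (3 : ZMod 3) = 0 := rfl
  rw [h3] at h1' h2' h6'
  simp only [zero_mul, add_zero] at h1' h2' h6'
  generalize (l₁ : ZMod 3) = x at *
  generalize (l₂ : ZMod 3) = y at *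
  generalize (m₁ : ZMod 3) = z at *
  generalize (m₂ : ZMod 3) = w at *
  revert x y z w
  decide

theorem bound_a {a A : ℤ} (ha : 0 < a) (i1 : 3 * a ^ 2 ≤ 4 * A) (i2 : A ^ 2 ≤ 8 * a) :
    a ≤ 2 ∧ A ≤ 4 := by
  have h1 : (3 * a ^ 2) ^ 2 ≤ (4 * A) ^ 2 := pow_le_pow_left₀ (by positivity) i1 2
  have ha2 : a ≤ 2 := by
    by_contra hc
    have hc : 3 ≤ a := by omega
    have h3 : 27 ≤ a ^ 3 := by
      have := pow_le_pow_left₀ (by norm_num) hc 3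
      linarith
    have : 27 * a ≤ a ^ 3 * a := mul_le_mul_of_nonneg_right h3 ha.le
    linarith [(by ring : (3 * a ^ 2) ^ 2 = 9 * (a ^ 3 * a)), (by ring : (4 * A) ^ 2 = 16 * A ^ 2)]
  refine ⟨ha2, ?_⟩
  by_contra hc
  nlinarith

theorem bound_b {a A B K : ℤ} (hA : 0 < A) (e : A * B = 6 * a + K ^ 2) (h : A ≤ B)
    (k1 : -A ≤ 2 * K) (k2 : 2 * K ≤ A) : A ^ 2 ≤ 8 * a := by
  nlinarith [mul_nonneg (by linarith : 0 ≤ A + 2 * K) (by linarith : 0 ≤ A - 2 * K),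
    mul_le_mul_of_nonneg_left h hA.le]

theorem final_case {a b c r s t : ℤ} (h : Good a b c r s t)
    (t1 : -a ≤ 2 * t) (t2 : 2 * t ≤ a) (s1 : -a ≤ 2 * s) (s2 : 2 * s ≤ a)
    (k1 : -(a * b - t ^ 2) ≤ 2 * (a * r - s * t)) (k2 : 2 * (a * r - s * t) ≤ a * b - t ^ 2)
    (hab : a ≤ b) (hAB : a * b - t ^ 2 ≤ a * c - s ^ 2) : AllRep a b c r s t := by
  obtain ⟨ha, hA, hd, ho, l₁, l₂, l₃, m₁, m₂, m₃, q₁, q₂, q₃, q₄, q₅, q₆, h1, h2, h3, h4, h5, h6⟩ := h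
  have e : (a * b - t ^ 2) * (a * c - s ^ 2) = 6 * a + (a * r - s * t) ^ 2 := by
    linear_combination a * hd
  have i1 : 3 * a ^ 2 ≤ 4 * (a * b - t ^ 2) := by nlinarith
  have i2 : (a * b - t ^ 2) ^ 2 ≤ 8 * a := bound_b hA e hAB k1 k2
  obtain ⟨ha2, hA4⟩ := bound_a ha i1 i2
  interval_cases a
  · have ht : t = 0 := by omega
    have hs : s = 0 := by omega
    subst ht hs
    have hb : b ≤ 2 := by nlinarith
    interval_cases b
    · have hr : r = 0 := by omega
      subst hr
      have hc : c = 6 := by omega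
      subst hc
      intro x y z
      exact ⟨x, y, z, by ring⟩
    · exact (no_mod3 _ _ _ _ _ _ _ h1 h2 h6).elim
  · exfalso
    have ht : -1 ≤ t := by omega
    have ht' : t ≤ 1 := by omega
    have hs : -1 ≤ s := by omega
    have hs' : s ≤ 1 := by omega
    have hr : -2 ≤ r := by nlinarith
    have hr' : r ≤ 2 := by nlinarith
    have hb : b ≤ 2 := by nlinarith
    interval_cases b
    interval_cases t <;> interval_cases s <;> interval_cases r <;> omega

theorem allRep_of_good : ∀ (M K : ℕ) (a b c r s t : ℤ), Good a b c r s t → a.toNat = M →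
    (a * b - t ^ 2).toNat = K → AllRep a b c r s t := by
  intro M
  induction M using Nat.strong_induction_on with
  | _ M ihM =>
  intro K
  induction K using Nat.strong_induction_on with
  | _ K ihK =>
  -- t-shift last
  have step3 : ∀ a b c r s t : ℤ, Good a b c r s t → a.toNat = M → (a * b - t ^ 2).toNat = K →
      -a ≤ 2 * t → 2 * t ≤ a → -a ≤ 2 * s → 2 * s ≤ a →
      -(a * b - t ^ 2) ≤ 2 * (a * r - s * t) → 2 * (a * r - s * t) ≤ a * b - t ^ 2 →
      AllRep a b c r s t := by
    intro a b c r s t h hM hK t1 t2 s1 s2 k1 k2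
    have ha := h.ha
    have hA := h.hA
    by_cases hab : a ≤ b
    · by_cases hAB : a * b - t ^ 2 ≤ a * c - s ^ 2
      · exact final_case h t1 t2 s1 s2 k1 k2 hab hAB
      · exact allRep_swap23 (ihK _ (by omega) a c b r t s (good_swap23 h) hM rfl)
    · have hb := (good_swap12 h).ha
      exact allRep_swap12 (ihM _ (by omega) _ b a c s r t (good_swap12 h) rfl rfl)
  -- shift of e3 by e1
  have step2 : ∀ a b c r s t : ℤ, Good a b c r s t → a.toNat = M → (a * b - t ^ 2).toNat = K →
      -a ≤ 2 * t → 2 * t ≤ a → 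
      -(a * b - t ^ 2) ≤ 2 * (a * r - s * t) → 2 * (a * r - s * t) ≤ a * b - t ^ 2 →
      AllRep a b c r s t := by
    intro a b c r s t h hM hK t1 t2 k1 k2
    obtain ⟨k, s1, s2⟩ := exists_shift_s6 s a h.ha
    have e : a * (r + k * t) - (s + k * a) * t = a * r - s * t := by ring
    exact allRep_swap23 (allRep_shift21 k (allRep_swap23 (step3 _ _ _ _ _ _
      (good_swap23 (good_shift21 k (good_swap23 h))) hM hK t1 t2 s1 s2
      (by rw [e]; exact k1) (by rw [e]; exact k2))))
  -- shift of e3 by e2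
  have step1 : ∀ a b c r s t : ℤ, Good a b c r s t → a.toNat = M → (a * b - t ^ 2).toNat = K →
      -a ≤ 2 * t → 2 * t ≤ a → AllRep a b c r s t := by
    intro a b c r s t h hM hK t1 t2
    obtain ⟨k, s1, s2⟩ := exists_shift_s6 (a * r - s * t) (a * b - t ^ 2) h.hA
    have h' := good_swap12 (good_swap23 (good_shift21 k (good_swap23 (good_swap12 h))))
    have e : a * (r + k * b) - (s + k * t) * t = a * r - s * t + k * (a * b - t ^ 2) := by ring
    exact allRep_swap12 (allRep_swap23 (allRep_shift21 k (allRep_swap23 (allRep_swap12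
      (step2 _ _ _ _ _ _ h' hM hK t1 t2 (by rw [e]; exact s1) (by rw [e]; exact s2))))))
  intro a b c r s t h hM hK
  obtain ⟨k, t1, t2⟩ := exists_shift_s6 t a h.ha
  have e : a * (b + 2 * k * t + k ^ 2 * a) - (t + k * a) ^ 2 = a * b - t ^ 2 := by ring
  exact allRep_shift21 k (step1 _ _ _ _ _ _ (good_shift21 k h) hM (by rw [e]; exact hK) t1 t2)

theorem rep_of_data (n g a b c d : ℤ) (hn : n % 3 = 1) (hg : g = 1 ∨ g = 2)
    (hc : 0 < c) (hd : 0 < d) (hd3 : d % 3 = 1) (hdet : n * d - g ^ 2 * c = 6)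
    (hac : a * c = d + b ^ 2) (ho : ¬ (2 ∣ a ∧ 2 ∣ c ∧ 2 ∣ n)) : Rep6 n := by
  have hc3 : ∃ q, c = 1 + 3 * q := by
    have h1 : (n * d) % 3 = 1 := by rw [Int.mul_emod, hn, hd3]; rfl
    refine ⟨(c - 1) / 3, ?_⟩
    generalize n * d = X at *
    rcases hg with rfl | rfl <;> omega
  obtain ⟨q, hq⟩ := hc3
  have ha3 : ∃ q', a = 1 + b ^ 2 + 3 * q' := by
    refine ⟨d / 3 - a * q, ?_⟩
    have : d = 3 * (d / 3) + 1 := by omega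
    rw [hq] at hac
    linear_combination hac + this
  obtain ⟨q', hq'⟩ := ha3
  have ha : 0 < a := by
    refine pos_of_mul_pos_left (b := c) ?_ hc.le
    rw [hac]; positivity
  have hG : Good a c n 0 g b := by
    refine ⟨ha, by rw [hac]; linarith, by linear_combination hdet + n * hac, ho, ?_⟩
    refine ⟨g, 0, 1, b, 1, 0, q' - (if g = 1 then 0 else 1), q, n / 3, 0, 0, 0, ?_, by linarith,
      by omega, by ring, by ring, by ring⟩
    rcases hg with rfl | rfl
    · simp; linarith
    · simp; linarith
  have := allRep_of_good _ _ a c n 0 g b hG rfl rfl 0 0 1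
  simpa using this

theorem sqrt_of_jacobi (p : ℕ) (hp : p.Prime) (d : ℤ) (h : jacobiSym (-d) p = 1) :
    ∃ b : ℤ, (p : ℤ) ∣ d + b ^ 2 := by
  have : Fact p.Prime := ⟨hp⟩
  obtain ⟨y, hy⟩ := ZMod.isSquare_of_jacobiSym_eq_one h
  obtain ⟨b, rfl⟩ := ZMod.intCast_surjective y
  refine ⟨b, ?_⟩
  rw [← ZMod.intCast_zmod_eq_zero_iff_dvd]
  push_cast at hy ⊢
  linear_combination -hy

theorem dirichlet' (q x : ℤ) (hq : 0 < q) (h : IsCoprime x q) :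
    ∃ (p k : ℕ), p.Prime ∧ (p : ℤ) = q * k + x := by
  lift q to ℕ using hq.le
  obtain ⟨p, h1, h2, h3⟩ := Nat.forall_exists_prime_gt_and_zmodEq x.natAbs (by omega) h
  obtain ⟨k, hk⟩ := h3.symm.dvd
  have : 0 < (q : ℤ) * k := by omega
  have hk0 : 0 < k := pos_of_mul_pos_right this hq.le
  lift k to ℕ using hk0.le
  exact ⟨p, k, h2, by linarith⟩

theorem cop24 (x : ℤ) (h2 : x % 2 = 1) (h3 : x % 3 ≠ 0) : IsCoprime x 24 := by
  have a : IsCoprime x 2 := ⟨1, -(x / 2), by omega⟩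
  have b : IsCoprime x 3 := by
    rcases (by omega : x % 3 = 1 ∨ x % 3 = 2) with h | h
    · exact ⟨1, -(x / 3), by omega⟩
    · exact ⟨-1, x / 3 + 1, by omega⟩
  have := (a.pow_right (n := 3)).mul_right b
  norm_num at this
  exact this

theorem case_odd (n : ℤ) (h0 : 0 < n) (hn : n % 3 = 1) (h2 : n % 2 = 1) : Rep6 n := by
  obtain ⟨r, hr, hrn⟩ : ∃ r : ℕ, (r = 1 ∨ r = 7) ∧ (r * n) % 4 = 3 := by
    rcases (by omega : n % 4 = 1 ∨ n % 4 = 3) with h | h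
    · exact ⟨7, by simp, by push_cast; omega⟩
    · exact ⟨1, by simp, by push_cast; omega⟩
  have hcop : IsCoprime (r * n - 6) (24 * n) := by
    refine IsCoprime.mul_right (cop24 _ (by omega) (by rcases hr with rfl | rfl <;> push_cast <;> omega)) ?_
    obtain ⟨j, hj⟩ : ∃ j, n = 6 * j + 1 := ⟨n / 6, by omega⟩
    exact ⟨j, 1 - j * r, by linear_combination hj⟩
  obtain ⟨p, k, hp, hpk⟩ := dirichlet' _ _ (by omega) hcop
  have hpd : (p : ℤ) = n * ((24 * k + r : ℕ) : ℤ) - 6 := by push_cast; linarith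
  have hp4 : p % 4 = 1 := by
    have : (p : ℤ) = 4 * (6 * (n * k)) + (r * n) - 6 := by rw [hpk]; ring
    omega
  have hdodd : Odd (24 * k + r) := by rw [Nat.odd_iff]; omega
  have hpodd : Odd p := by rw [Nat.odd_iff]; omega
  have hJ : jacobiSym (-((24 * k + r : ℕ) : ℤ)) p = 1 := by
    rw [jacobiSym.neg _ hpodd, ZMod.χ₄_nat_one_mod_four hp4, one_mul,
      jacobiSym.quadratic_reciprocity_one_mod_four' hdodd hp4,
      jacobiSym.mod_left' (a₂ := -6), jacobiSym.mod_right _ hdodd]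
    · have : (24 * k + r) % (4 * (-6 : ℤ).natAbs) = r := by
        rcases hr with rfl | rfl <;> norm_num [Nat.mul_add_mod]
      rw [this]
      rcases hr with rfl | rfl <;> norm_num
    · rw [hpd]
      refine Int.emod_emod_of_dvd _ (dvd_refl _) |>.symm.trans ?_
      rw [show n * ((24 * k + r : ℕ) : ℤ) - 6 = -6 + ((24 * k + r : ℕ) : ℤ) * n by ring,
        Int.add_mul_emod_self_left]
      simp
  obtain ⟨b, a, hab⟩ := sqrt_of_jacobi p hp _ hJ
  exact rep_of_data n 1 a b p (24 * k + r : ℕ) hn (Or.inl rfl) (by have := hp.pos; omega)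
    (by omega) (by omega) (by rw [hpd]; ring) (by rw [hab]; ring) (by omega)

theorem case_six (m : ℤ) (h0 : 0 < m) (hm : m % 3 = 2) (h2 : m % 4 = 3) : Rep6 (2 * m) := by
  obtain ⟨x, hx⟩ : ∃ x, 2 * x = 7 * m - 3 := ⟨(7 * m - 3) / 2, by omega⟩
  have hcop : IsCoprime x (12 * m) := by
    refine IsCoprime.mul_right ((cop24 x (by omega) (by omega)).of_isCoprime_of_dvd_right ⟨2, by norm_num⟩) ?_
    obtain ⟨j, hj⟩ : ∃ j, m = 3 * j + 2 := ⟨m / 3, by omega⟩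
    exact ⟨-2 * (j + 1), 7 * (j + 1) - 1, by linear_combination -(j + 1) * hx - hj⟩
  obtain ⟨p, k, hp, hpk⟩ := dirichlet' _ _ (by omega) hcop
  have hpd : 2 * (p : ℤ) = m * ((24 * k + 7 : ℕ) : ℤ) - 3 := by push_cast; linear_combination 2 * hpk + hx
  have hpodd : Odd p := by
    rw [Nat.odd_iff]
    have : (p : ℤ) = 2 * (6 * (m * k)) + x := by rw [hpk]; ring
    omega
  have hdodd : Odd (24 * k + 7) := by rw [Nat.odd_iff]; omega
  have hpd1 : jacobiSym p (24 * k + 7) = 1 := by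
    have e1 : jacobiSym 2 (24 * k + 7) = 1 := by
      rw [jacobiSym.mod_right _ hdodd]
      have : (24 * k + 7) % (4 * (2 : ℤ).natAbs) = 7 := by norm_num; omega
      rw [this]; norm_num
    have e2 : jacobiSym (2 * p) (24 * k + 7) = 1 := by
      rw [jacobiSym.mod_left' (a₂ := -3), jacobiSym.mod_right _ hdodd]
      · have : (24 * k + 7) % (4 * (-3 : ℤ).natAbs) = 7 := by norm_num; omega
        rw [this]; norm_num
      · rw [hpd, show m * ((24 * k + 7 : ℕ) : ℤ) - 3 = -3 + ((24 * k + 7 : ℕ) : ℤ) * m by ring,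
          Int.add_mul_emod_self_left]
    rwa [jacobiSym.mul_left, e1, one_mul] at e2
  have hJ : jacobiSym (-((24 * k + 7 : ℕ) : ℤ)) p = 1 := by
    rw [jacobiSym.neg _ hpodd]
    rcases Nat.odd_mod_four_iff.mp (Nat.odd_iff.mp hpodd) with h | h
    · rw [ZMod.χ₄_nat_one_mod_four h, one_mul,
        jacobiSym.quadratic_reciprocity_one_mod_four' hdodd h, hpd1]
    · rw [ZMod.χ₄_nat_three_mod_four h,
        jacobiSym.quadratic_reciprocity_three_mod_four (by omega) h, hpd1]
      rfl
  obtain ⟨b, a, hab⟩ := sqrt_of_jacobi p hp _ hJ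
  refine rep_of_data (2 * m) 2 a b p (24 * k + 7 : ℕ) (by omega) (Or.inr rfl)
    (by have := hp.pos; omega)
    (by omega) (by omega) (by linear_combination -2 * hpd) (by rw [hab]; ring) ?_
  have := Nat.odd_iff.mp hpodd
  omega

theorem case_two (m : ℤ) (h0 : 0 < m) (hm : m % 3 = 2) (h2 : m % 4 = 1) : Rep6 (2 * m) := by
  have hcop : IsCoprime (10 * m - 3) (24 * m) := by
    refine IsCoprime.mul_right (cop24 _ (by omega) (by omega)) ?_
    obtain ⟨j, hj⟩ : ∃ j, m = 3 * j + 2 := ⟨m / 3, by omega⟩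
    exact ⟨-(j + 1), 10 * (j + 1) - 1, by linear_combination - hj⟩
  obtain ⟨p, k, hp, hpk⟩ := dirichlet' _ _ (by omega) hcop
  have hpd : (p : ℤ) = 2 * m * ((12 * k + 5 : ℕ) : ℤ) - 3 := by push_cast; linear_combination hpk
  have hp8 : p % 8 = 7 := by
    have : (p : ℤ) = 8 * (3 * (m * k)) + (10 * m - 3) := by rw [hpk]; ring
    omega
  have hpodd : Odd p := by rw [Nat.odd_iff]; omega
  have hdodd : Odd (12 * k + 5) := by rw [Nat.odd_iff]; omega
  have hJ : jacobiSym (-(2 * ((12 * k + 5 : ℕ) : ℤ))) p = 1 := by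
    have e1 : jacobiSym (-2) p = -1 := by
      rw [jacobiSym.mod_right _ hpodd]
      have : p % (4 * (-2 : ℤ).natAbs) = 7 := by norm_num; omega
      rw [this]; norm_num
    have e2 : jacobiSym ((12 * k + 5 : ℕ) : ℤ) p = -1 := by
      rw [jacobiSym.quadratic_reciprocity_one_mod_four (by omega) hpodd,
        jacobiSym.mod_left' (a₂ := -3), jacobiSym.mod_right _ hdodd]
      · have : (12 * k + 5) % (4 * (-3 : ℤ).natAbs) = 5 := by norm_num [hp8]
        rw [this]; norm_num
      · rw [hpd, show 2 * m * ((12 * k + 5 : ℕ) : ℤ) - 3 = -3 + ((12 * k + 5 : ℕ) : ℤ) * (2 * m) by ring,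
          Int.add_mul_emod_self_left]
    rw [← neg_mul, jacobiSym.mul_left, e1, e2]; rfl
  obtain ⟨b, a, hab⟩ := sqrt_of_jacobi p hp _ hJ
  -- make b even
  obtain ⟨b, a, hab⟩ : ∃ b a : ℤ, 2 * ((12 * k + 5 : ℕ) : ℤ) + (2 * b) ^ 2 = p * a := by
    rcases Int.even_or_odd' b with ⟨c, rfl | rfl⟩
    · exact ⟨c, a, hab⟩
    · obtain ⟨v, hv⟩ := hpodd
      refine ⟨c - v, a - 2 * (2 * c + 1) + p, ?_⟩
      have hv' : (p : ℤ) = 2 * v + 1 := by exact_mod_cast hv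
      have : 2 * (c - v) = 2 * c + 1 - (p : ℤ) := by linarith
      rw [this]
      linear_combination hab
  obtain ⟨a, rfl⟩ : ∃ a', a = 2 * a' := by
    have : Even ((p : ℤ) * a) := by rw [← hab]; exact ⟨((12 * k + 5 : ℕ) : ℤ) + 2 * b ^ 2, by ring⟩
    rcases Int.even_mul.mp this with h | h
    · rw [Int.even_iff] at h; omega
    · obtain ⟨a', h⟩ := h
      exact ⟨a', by linarith⟩
  have hab' : ((12 * k + 5 : ℕ) : ℤ) + 2 * b ^ 2 = p * a := by linarith
  refine rep_of_data (2 * m) 1 a (2 * b) (2 * p) (2 * (12 * k + 5 : ℕ)) (by omega) (Or.inl rfl)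
    (by have := hp.pos; omega)
    (by omega) (by omega) (by linear_combination -2 * hpd) (by linear_combination -hab) ?_
  rintro ⟨⟨a', rfl⟩, -⟩
  have : ((12 * k + 5 : ℕ) : ℤ) = 2 * (p * a' - b ^ 2) := by linear_combination hab'
  omega

theorem rep_all : ∀ n : ℕ, n % 3 = 1 → Rep6 n := by
  intro n
  induction n using Nat.strong_induction_on with
  | _ n ih =>
  intro hn
  by_cases h1 : n % 2 = 1
  · exact case_odd n (by omega) (by omega) (by omega)
  by_cases h4 : n % 4 = 0
  · obtain ⟨m, rfl⟩ : ∃ m, n = 4 * m := ⟨n / 4, by omega⟩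
    obtain ⟨u, v, w, h⟩ := ih m (by omega) (by omega)
    exact ⟨2 * u, 2 * v, 2 * w, by push_cast; linear_combination 4 * h⟩
  obtain ⟨m, rfl⟩ : ∃ m, n = 2 * m := ⟨n / 2, by omega⟩
  push_cast
  rcases (by omega : m % 4 = 1 ∨ m % 4 = 3) with h | h
  · exact case_two m (by omega) (by omega) (by omega)
  · exact case_six m (by omega) (by omega) (by omega)

theorem finish (N u v w : ℤ) (h : 3 * N + 1 = u ^ 2 + v ^ 2 + 6 * w ^ 2) (hu : u % 3 = 0)
    (hv : v % 3 ≠ 0) : ∃ x y z : ℤ, 2 * x ^ 2 + 3 * y ^ 2 + (3 * z ^ 2 - 2 * z) = N := by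
  obtain ⟨y, rfl⟩ : ∃ y, u = 3 * y := ⟨u / 3, by omega⟩
  rcases (by omega : v % 3 = 1 ∨ v % 3 = 2) with h' | h'
  · obtain ⟨z, rfl⟩ : ∃ z, v = -(3 * z - 1) := ⟨-(v / 3), by omega⟩
    exact ⟨w, y, z, by linarith⟩
  · obtain ⟨z, rfl⟩ : ∃ z, v = 3 * z - 1 := ⟨v / 3 + 1, by omega⟩
    exact ⟨w, y, z, by linarith⟩

theorem universal_2x2_3y2_P8 :
    ∀ N : ℤ, 0 ≤ N →
      ∃ x y z : ℤ, 2 * x ^ 2 + 3 * y ^ 2 + (3 * z ^ 2 - 2 * z) = N := by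
  intro N hN
  lift N to ℕ using hN
  obtain ⟨u, v, w, h⟩ := rep_all (3 * N + 1) (by omega)
  push_cast at h
  have key : ∀ t : ℤ, t % 3 = 0 ∧ t ^ 2 % 3 = 0 ∨ t % 3 ≠ 0 ∧ t ^ 2 % 3 = 1 := by
    intro t
    rcases (by omega : t % 3 = 0 ∨ t % 3 = 1 ∨ t % 3 = 2) with h | h | h <;>
      simp [pow_two, Int.mul_emod, h]
  rcases key u with ⟨hu, hu'⟩ | ⟨hu, hu'⟩ <;> rcases key v with ⟨hv, hv'⟩ | ⟨hv, hv'⟩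
  · omega
  · exact finish N u v w h hu hv
  · exact finish N v u w (by linarith) hv hu
  · omega
end
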